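/- There exist a constant C > 0 independent of m and an integer l_0 such that for all l > l_0, all r ∈ {1,…,(m+1)^k}, all t ∈ {1,…,n+1}, and every function φ : ℝ^n → ℝ with ‖φ‖_* < ∞ satisfying the orthogonality condition ∫_{ℝ^n} U_{P^r,Λ_r}^{4s/(n−2s)} Z_{r,t} φ dx = 0, one has | ∫_{ℝ^n} K(x/λ) W_m^{4s/(n−2s)} Z_{r,t} φ dx | ≤ C ‖φ‖_* λ^{−(τ−s)} (λl)^{−n/2}. -/

import Mathlib

/-- `X` enumerates the lattice points `{d·q : q ∈ ([0,m+1)^k × {0}) ∩ ℤ^n}` (with spacing `d = λl`). -/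
def latticeEnum (n k m : ℕ) (d : ℝ)
    (X : Fin ((m + 1) ^ k) → EuclideanSpace ℝ (Fin n)) : Prop :=
  Function.Injective X ∧
  (∀ i, ∃ q : Fin n → ℤ,
      (∀ j : Fin n, (j : ℕ) < k → 0 ≤ q j ∧ q j ≤ (m : ℤ)) ∧
      (∀ j : Fin n, k ≤ (j : ℕ) → q j = 0) ∧
      (∀ j : Fin n, X i j = d * (q j : ℝ))) ∧
  (∀ q : Fin n → ℤ,
      (∀ j : Fin n, (j : ℕ) < k → 0 ≤ q j ∧ q j ≤ (m : ℤ)) →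
      (∀ j : Fin n, k ≤ (j : ℕ) → q j = 0) →
      ∃ i, ∀ j : Fin n, X i j = d * (q j : ℝ))

/-- Conditions (H₁)–(H₃) on `K`, with `K(0) = 1`: positivity and boundedness, `C^{1,1}`
regularity, `1`-periodicity in the first `k` variables, and the expansion
`K(x) = 1 + Σ aᵢ|xᵢ|^β + R(x)` near the critical point `0`. -/
def KHyp (n k : ℕ) (β : ℝ) (a : Fin n → ℝ)
    (K : EuclideanSpace ℝ (Fin n) → ℝ) : Prop :=
  (∃ K₀ K₁ : ℝ, 0 < K₀ ∧ ∀ x, K₀ ≤ K x ∧ K x ≤ K₁) ∧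
  ContDiff ℝ 1 K ∧ (∃ L : NNReal, LipschitzWith L (fderiv ℝ K)) ∧
  (∀ x : EuclideanSpace ℝ (Fin n), ∀ j : Fin n, (j : ℕ) < k →
      K (x + EuclideanSpace.single j (1 : ℝ)) = K x) ∧
  K 0 = 1 ∧ fderiv ℝ K 0 = 0 ∧
  (∀ i, a i ≠ 0) ∧ (∑ i, a i) < 0 ∧
  ∃ R : EuclideanSpace ℝ (Fin n) → ℝ,
    (∀ᶠ x in nhds 0, K x = 1 + (∑ i, a i * |x i| ^ β) + R x) ∧
    ContDiff ℝ (⌊β⌋₊ - 1 : ℕ) R ∧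
    (∃ L : NNReal, LipschitzWith L (iteratedFDeriv ℝ (⌊β⌋₊ - 1) R)) ∧
    Filter.Tendsto
      (fun y : EuclideanSpace ℝ (Fin n) =>
        ∑ j ∈ Finset.range (⌊β⌋₊ + 1), ‖iteratedFDeriv ℝ j R y‖ * ‖y‖ ^ (-β + (j : ℝ)))
      (nhdsWithin 0 {0}ᶜ) (nhds 0)

/-!
By the orthogonality condition one may subtract `∫ U_r ^ p Z φ = 0`, where `p = 4s / (n - 2s)`, so
that only the difference `K(x / λ) W ^ p - U_r ^ p` matters. It has two sources. The coefficient
contributes `K(x / λ) - 1`, which by periodicity is `O((|x - X^r| / λ) ^ β)` around the `r`-th peak;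
the other peaks contribute `W ^ p - U_r ^ p`, which is small relative to `U_r ^ p` where `U_r`
dominates and is bounded by `W ^ p` elsewhere. The relation `λ ^ β = (λ l) ^ (n - 2s)` balances the
two errors. Either one, multiplied by the weights of `Z` and `φ`, is bounded by
`λ ^ (-(τ - s)) (λ l) ^ (-n / 2)` times a superposition of integrable peaks with coefficients
`max(1, |X^i - X^r| / (λ l)) ^ (-τ)`. Since `τ` exceeds the rank `k` of the lattice, these
coefficients have a sum independent of the number of peaks.
-/

/-! ### Sparse families of peaks -/

section

open Finset

section SparseFamilies

variable {ι E : Type*} [SeminormedAddCommGroup E] {d τ M e : ℝ}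

/-- The coupling `max(1, |z| / d)^{-τ}` of two peaks at relative position `z`. The truncation at `1`
makes the self-coupling of a peak equal to `1`. -/
noncomputable def coupling (d τ : ℝ) (z : E) : ℝ :=
  max 1 (‖z‖ / d) ^ (-τ)

lemma coupling_zero (d τ : ℝ) : coupling d τ (0 : E) = 1 := by
  simp [coupling]

lemma coupling_nonneg (d τ : ℝ) (z : E) : 0 ≤ coupling d τ z := by
  unfold coupling
  positivity

lemma coupling_sub_comm (d τ : ℝ) (y z : E) : coupling d τ (y - z) = coupling d τ (z - y) := by
  rw [coupling, norm_sub_rev, coupling]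

lemma rpow_neg_half_norm_le_coupling {z : E} (hd : 0 < d) (hz : d ≤ ‖z‖) (he : τ ≤ e) :
    (‖z‖ / 2) ^ (-e) ≤ 2 ^ e * d ^ (-e) * coupling d τ z := by
  have hone : 1 ≤ ‖z‖ / d := (one_le_div hd).2 hz
  calc (‖z‖ / 2) ^ (-e) = (2⁻¹ * (d * (‖z‖ / d))) ^ (-e) := by congr 1; field_simp
    _ = 2 ^ e * d ^ (-e) * (‖z‖ / d) ^ (-e) := by
        rw [Real.mul_rpow (by positivity) (by positivity), Real.mul_rpow hd.le (by positivity),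
          Real.rpow_neg_eq_inv_rpow, inv_inv, mul_assoc]
    _ ≤ 2 ^ e * d ^ (-e) * coupling d τ z := by
        rw [coupling, max_eq_right hone]
        gcongr

variable [Fintype ι]

/-- A finite family of points with mutual distances at least `d` in which the couplings of every
point with the whole family add up to at most `M`. -/
structure IsSparse (X : ι → E) (d τ M : ℝ) : Prop where
  pos : 0 < d
  le_norm_sub : ∀ ⦃i j⦄, i ≠ j → d ≤ ‖X i - X j‖
  sum_coupling_le : ∀ j, ∑ i, coupling d τ (X i - X j) ≤ M

/-- The superposition of the peaks `(1 + |x - Xⁱ|)^{-e}`, each weighted by its coupling with the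
`r`-th one. It dominates the error terms around the `r`-th peak, and its integral is bounded
independently of the number of peaks. -/
noncomputable def envelope (X : ι → E) (d τ e : ℝ) (r : ι) (x : E) : ℝ :=
  ∑ i, coupling d τ (X i - X r) * (1 + ‖x - X i‖) ^ (-e)

lemma coupling_mul_rpow_le_envelope (X : ι → E) (d τ e : ℝ) (r i : ι) (x : E) :
    coupling d τ (X i - X r) * (1 + ‖x - X i‖) ^ (-e) ≤ envelope X d τ e r x :=
  single_le_sum (f := fun i ↦ coupling d τ (X i - X r) * (1 + ‖x - X i‖) ^ (-e))
    (fun i _ ↦ mul_nonneg (coupling_nonneg d τ _) (by positivity)) (mem_univ i)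

lemma rpow_le_envelope (X : ι → E) (d τ e : ℝ) (r : ι) (x : E) :
    (1 + ‖x - X r‖) ^ (-e) ≤ envelope X d τ e r x := by
  simpa [coupling_zero] using coupling_mul_rpow_le_envelope X d τ e r r x

lemma envelope_nonneg (X : ι → E) (d τ e : ℝ) (r : ι) (x : E) : 0 ≤ envelope X d τ e r x :=
  le_trans (by positivity) (rpow_le_envelope X d τ e r x)

namespace IsSparse

variable {X : ι → E} {x : E} {i j r : ι}

lemma one_le (hX : IsSparse X d τ M) (j : ι) : 1 ≤ M :=
  calc 1 = coupling d τ (X j - X j) := by rw [sub_self, coupling_zero]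
    _ ≤ ∑ i, coupling d τ (X i - X j) :=
        single_le_sum (f := fun i ↦ coupling d τ (X i - X j))
          (fun i _ ↦ coupling_nonneg d τ _) (mem_univ j)
    _ ≤ M := hX.sum_coupling_le j

-- The point `x` is at distance at least `|Xⁱ - Xʲ| / 2` from the farther of the two peaks.
lemma rpow_neg_le_coupling (hX : IsSparse X d τ M) (hij : i ≠ j)
    (hle : ‖x - X j‖ ≤ ‖x - X i‖) (he₀ : 0 ≤ e) (he : τ ≤ e) :
    (1 + ‖x - X i‖) ^ (-e) ≤ 2 ^ e * d ^ (-e) * coupling d τ (X i - X j) := by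
  have hdist := hX.le_norm_sub hij
  have htri : ‖X i - X j‖ ≤ ‖x - X j‖ + ‖x - X i‖ := by
    simpa using norm_sub_le (x - X j) (x - X i)
  refine le_trans ?_ (rpow_neg_half_norm_le_coupling hX.pos hdist he)
  exact Real.rpow_le_rpow_of_nonpos (by linarith [hX.pos]) (by linarith) (by linarith)

lemma rpow_neg_le_coupling_mul_rpow {η : ℝ} (hX : IsSparse X d τ M) (hij : i ≠ j)
    (hle : ‖x - X j‖ ≤ ‖x - X i‖) (hη₀ : 0 ≤ η) (hη : τ ≤ η) (he : η ≤ e) :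
    (1 + ‖x - X i‖) ^ (-e) ≤
      2 ^ η * d ^ (-η) * coupling d τ (X i - X j) * (1 + ‖x - X j‖) ^ (η - e) := by
  have hd := hX.pos
  rw [show -e = -η + (η - e) by ring, Real.rpow_add (by positivity)]
  exact mul_le_mul (hX.rpow_neg_le_coupling hij hle hη₀ hη)
    (Real.rpow_le_rpow_of_nonpos (by positivity) (by linarith) (by linarith)) (by positivity)
    (mul_nonneg (by positivity) (coupling_nonneg d τ _))

lemma rpow_mul_rpow_le {η : ℝ} (hX : IsSparse X d τ M) (hir : i ≠ r) (hη₀ : 0 ≤ η) (hη : τ ≤ η)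
    (he : η ≤ e) :
    (1 + ‖x - X r‖) ^ (-e) * (1 + ‖x - X i‖) ^ (-η) ≤
      2 ^ η * d ^ (-η) * (coupling d τ (X i - X r) *
        ((1 + ‖x - X r‖) ^ (-e) + (1 + ‖x - X i‖) ^ (-e))) := by
  have hd := hX.pos
  have hfar : ∀ a b : ι, a ≠ b → ‖x - X b‖ ≤ ‖x - X a‖ →
      (1 + ‖x - X a‖) ^ (-η) * (1 + ‖x - X b‖) ^ (-e) ≤
        2 ^ η * d ^ (-η) * (coupling d τ (X a - X b) *
          ((1 + ‖x - X a‖) ^ (-e) + (1 + ‖x - X b‖) ^ (-e))) := by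
    intro a b hab hle
    have hnn := coupling_nonneg d τ (X a - X b)
    rw [← mul_assoc]
    gcongr
    · exact hX.rpow_neg_le_coupling hab hle hη₀ hη
    · exact le_add_of_nonneg_left (by positivity)
  rcases le_total ‖x - X r‖ ‖x - X i‖ with hle | hle
  · rw [mul_comm, add_comm ((1 + ‖x - X r‖) ^ (-e))]
    exact hfar i r hir hle
  · have hswap : (1 + ‖x - X r‖) ^ (η - e) ≤ (1 + ‖x - X i‖) ^ (η - e) :=
      Real.rpow_le_rpow_of_nonpos (by positivity) (by linarith) (by linarith)
    have hsplit : ∀ a : ι, (1 + ‖x - X a‖) ^ (-e) =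
        (1 + ‖x - X a‖) ^ (-η) * (1 + ‖x - X a‖) ^ (η - e) := fun a ↦ by
      rw [← Real.rpow_add (by positivity)]
      ring_nf
    rw [coupling_sub_comm]
    refine le_trans ?_ (hfar r i hir.symm hle)
    calc (1 + ‖x - X r‖) ^ (-e) * (1 + ‖x - X i‖) ^ (-η)
        = (1 + ‖x - X r‖) ^ (-η) * (1 + ‖x - X r‖) ^ (η - e) * (1 + ‖x - X i‖) ^ (-η) := by
          rw [hsplit r]
      _ ≤ (1 + ‖x - X r‖) ^ (-η) * (1 + ‖x - X i‖) ^ (η - e) * (1 + ‖x - X i‖) ^ (-η) := by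
          gcongr
      _ = (1 + ‖x - X r‖) ^ (-η) * (1 + ‖x - X i‖) ^ (-e) := by
          rw [hsplit i]
          ring

lemma sum_erase_rpow_le [DecidableEq ι] (hX : IsSparse X d τ M) (hj : ∀ i, ‖x - X j‖ ≤ ‖x - X i‖)
    (hτ : 0 ≤ τ) (he : τ ≤ e) :
    ∑ i ∈ univ.erase j, (1 + ‖x - X i‖) ^ (-e) ≤
      2 ^ τ * M * ((1 + ‖x - X j‖) / d) ^ τ * (1 + ‖x - X j‖) ^ (-e) := by
  have hd := hX.pos
  have hterm : ∀ i ∈ univ.erase j, (1 + ‖x - X i‖) ^ (-e) ≤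
      coupling d τ (X i - X j) * (2 ^ τ * d ^ (-τ) * (1 + ‖x - X j‖) ^ (τ - e)) := by
    intro i hi
    refine (hX.rpow_neg_le_coupling_mul_rpow (ne_of_mem_erase hi) (hj i) hτ le_rfl he).trans_eq ?_
    ring
  have hsum : ∑ i ∈ univ.erase j, coupling d τ (X i - X j) ≤ M :=
    (sum_le_univ_sum_of_nonneg fun i ↦ coupling_nonneg d τ _).trans (hX.sum_coupling_le j)
  calc ∑ i ∈ univ.erase j, (1 + ‖x - X i‖) ^ (-e)
      ≤ (∑ i ∈ univ.erase j, coupling d τ (X i - X j)) *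
          (2 ^ τ * d ^ (-τ) * (1 + ‖x - X j‖) ^ (τ - e)) := by
        rw [sum_mul]
        exact sum_le_sum hterm
    _ ≤ M * (2 ^ τ * d ^ (-τ) * (1 + ‖x - X j‖) ^ (τ - e)) := by gcongr
    _ = _ := by
        rw [Real.div_rpow (by positivity) hd.le, sub_eq_add_neg τ e,
          Real.rpow_add (by positivity), Real.rpow_neg hd.le]
        ring

lemma sum_rpow_le (hX : IsSparse X d τ M) (hj : ∀ i, ‖x - X j‖ ≤ ‖x - X i‖)
    (hτ : 0 ≤ τ) (he : τ ≤ e) :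
    ∑ i, (1 + ‖x - X i‖) ^ (-e) ≤
      (1 + 2 ^ τ * M * ((1 + ‖x - X j‖) / d) ^ τ) * (1 + ‖x - X j‖) ^ (-e) := by
  classical
  rw [← add_sum_erase _ _ (mem_univ j)]
  linarith [hX.sum_erase_rpow_le hj hτ he]

lemma rpow_mul_sum_erase_le [DecidableEq ι] {η : ℝ} (hX : IsSparse X d τ M) (hη₀ : 0 ≤ η)
    (hη : τ ≤ η) (he : η ≤ e) :
    (1 + ‖x - X r‖) ^ (-e) * ∑ i ∈ univ.erase r, (1 + ‖x - X i‖) ^ (-η) ≤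
      2 ^ η * (M + 1) * d ^ (-η) * envelope X d τ e r x := by
  have hd := hX.pos
  have hM := hX.one_le r
  have hsum : ∑ i, coupling d τ (X i - X r) * (1 + ‖x - X r‖) ^ (-e) ≤
      M * envelope X d τ e r x := by
    rw [← sum_mul]
    gcongr
    · exact hX.sum_coupling_le r
    · exact rpow_le_envelope X d τ e r x
  calc (1 + ‖x - X r‖) ^ (-e) * ∑ i ∈ univ.erase r, (1 + ‖x - X i‖) ^ (-η)
      ≤ ∑ i ∈ univ.erase r, 2 ^ η * d ^ (-η) * (coupling d τ (X i - X r) *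
          ((1 + ‖x - X r‖) ^ (-e) + (1 + ‖x - X i‖) ^ (-e))) := by
        rw [mul_sum]
        exact sum_le_sum fun i hi ↦ hX.rpow_mul_rpow_le (ne_of_mem_erase hi) hη₀ hη he
    _ ≤ ∑ i, 2 ^ η * d ^ (-η) * (coupling d τ (X i - X r) *
          ((1 + ‖x - X r‖) ^ (-e) + (1 + ‖x - X i‖) ^ (-e))) :=
        sum_le_univ_sum_of_nonneg fun i ↦ mul_nonneg (by positivity)
          (mul_nonneg (coupling_nonneg d τ _) (by positivity))
    _ = 2 ^ η * d ^ (-η) * (∑ i, coupling d τ (X i - X r) * (1 + ‖x - X r‖) ^ (-e) +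
          envelope X d τ e r x) := by
        simp only [← mul_sum, mul_add, sum_add_distrib, envelope]
    _ ≤ 2 ^ η * d ^ (-η) * (M * envelope X d τ e r x + envelope X d τ e r x) := by gcongr
    _ = _ := by ring

end IsSparse

end SparseFamilies

-- Since `1 + V / U ≥ 1`, its `p`-th power is at most its square.
lemma add_rpow_sub_rpow_le {U V Q ρ p : ℝ} (hU : 0 < U) (hV : 0 ≤ V) (hρ₀ : 0 ≤ ρ)
    (hρ₁ : ρ ≤ 1) (hVU : V ≤ Q * ρ * U) (hp : p ≤ 2) :
    (U + V) ^ p - U ^ p ≤ (2 * Q + Q ^ 2) * ρ * U ^ p := by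
  have hone : 1 ≤ 1 + V / U := le_add_of_nonneg_right (by positivity)
  have hratio : V / U ≤ Q * ρ := (div_le_iff₀ hU).2 hVU
  have hpow : (1 + V / U) ^ p ≤ 1 + (2 * Q + Q ^ 2) * ρ :=
    calc (1 + V / U) ^ p ≤ (1 + V / U) ^ (2 : ℝ) := Real.rpow_le_rpow_of_exponent_le hone hp
      _ = (1 + V / U) ^ 2 := Real.rpow_two _
      _ ≤ (1 + Q * ρ) ^ 2 := by gcongr
      _ ≤ 1 + (2 * Q + Q ^ 2) * ρ := by
          nlinarith [mul_nonneg (sq_nonneg Q) (mul_nonneg hρ₀ (sub_nonneg.2 hρ₁))]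
  have hfactor : (U + V) ^ p = (1 + V / U) ^ p * U ^ p := by
    rw [← Real.mul_rpow (by positivity) hU.le]
    congr 1
    field_simp
  rw [hfactor]
  nlinarith [Real.rpow_pos_of_pos hU p]

lemma mul_div_rpow_rpow_div {c A d τ : ℝ} (hc : 0 ≤ c) (hA : 0 ≤ A) (hd : 0 ≤ d) (hτ : τ ≠ 0)
    (ρ : ℝ) : (c * (A / d) ^ τ) ^ (ρ / τ) = c ^ (ρ / τ) * d ^ (-ρ) * A ^ ρ := by
  rw [Real.mul_rpow hc (by positivity), ← Real.rpow_mul (by positivity), mul_div_cancel₀ _ hτ,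
    Real.div_rpow hA hd, Real.rpow_neg hd]
  ring

section PeakEstimates

variable {ι E : Type*} [SeminormedAddCommGroup E] [Fintype ι]
  {X : ι → E} {d τ M N p e η : ℝ} {x : E} {j r : ι}

lemma rpow_mul_sum_erase_le_of_sum_erase_le [DecidableEq ι] (hN : 0 < N) (hη : η ≤ N)
    (hr : ∑ i ∈ univ.erase r, (1 + ‖x - X i‖) ^ (-N) ≤ (1 + ‖x - X r‖) ^ (-N)) :
    (1 + ‖x - X r‖) ^ N * ∑ i ∈ univ.erase r, (1 + ‖x - X i‖) ^ (-N) ≤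
      (1 + ‖x - X r‖) ^ η * ∑ i ∈ univ.erase r, (1 + ‖x - X i‖) ^ (-η) := by
  have hratio : ∀ (a : ℝ) (i : ι), (1 + ‖x - X r‖) ^ a * (1 + ‖x - X i‖) ^ (-a) =
      ((1 + ‖x - X r‖) / (1 + ‖x - X i‖)) ^ a := fun a i ↦ by
    rw [Real.div_rpow (by positivity) (by positivity), Real.rpow_neg (by positivity),
      div_eq_mul_inv]
  simp only [mul_sum, hratio]
  refine sum_le_sum fun i hi ↦ ?_
  have hpeak : (1 + ‖x - X i‖) ^ (-N) ≤ (1 + ‖x - X r‖) ^ (-N) :=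
    (single_le_sum (f := fun i ↦ (1 + ‖x - X i‖) ^ (-N)) (fun i _ ↦ by positivity) hi).trans hr
  have hle : 1 + ‖x - X r‖ ≤ 1 + ‖x - X i‖ :=
    (Real.rpow_le_rpow_iff_of_neg (by positivity) (by positivity) (by linarith)).1 hpeak
  exact Real.rpow_le_rpow_of_exponent_ge (by positivity) (div_le_one_of_le₀ hle (by positivity)) hη

namespace IsSparse

lemma rpow_mul_mul_sum_le [DecidableEq ι] {b e' g : ℝ} (hX : IsSparse X d τ M) (hη₀ : 0 ≤ η)
    (hη : τ ≤ η) (he : η ≤ e) (he' : e ≤ e') (hb : b + e ≤ e' + η) (hg₁ : g ≤ 1)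
    (hg : g ≤ (1 + ‖x - X r‖) ^ η * ∑ i ∈ univ.erase r, (1 + ‖x - X i‖) ^ (-η) +
      d ^ (-η) * (1 + ‖x - X r‖) ^ b) :
    (1 + ‖x - X r‖) ^ (-e') * g * ∑ i, (1 + ‖x - X i‖) ^ (-η) ≤
      (2 ^ (η + 1) * (M + 1) + 1) * d ^ (-η) * envelope X d τ e r x := by
  have hd := hX.pos
  set A := 1 + ‖x - X r‖ with hA
  set S := ∑ i ∈ univ.erase r, (1 + ‖x - X i‖) ^ (-η) with hS
  have hA₁ : 1 ≤ A := le_add_of_nonneg_right (norm_nonneg _)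
  have hA₀ : 0 < A := one_pos.trans_le hA₁
  have hS₀ : 0 ≤ S := sum_nonneg fun i _ ↦ by positivity
  have hcancel : A ^ η * A ^ (-η) = 1 := by rw [← Real.rpow_add hA₀, add_neg_cancel, Real.rpow_zero]
  calc A ^ (-e') * g * ∑ i, (1 + ‖x - X i‖) ^ (-η)
      = A ^ (-e') * A ^ (-η) * g + A ^ (-e') * S * g := by
        rw [← add_sum_erase _ _ (mem_univ r)]
        ring
    _ ≤ A ^ (-e') * A ^ (-η) * (A ^ η * S + d ^ (-η) * A ^ b) + A ^ (-e') * S * 1 := by gcongr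
    _ = 2 * (A ^ (-e') * S) + d ^ (-η) * A ^ (b - e' - η) := by
        rw [sub_sub, sub_eq_add_neg b, neg_add e', Real.rpow_add hA₀ b, Real.rpow_add hA₀ (-e')]
        linear_combination A ^ (-e') * S * hcancel
    _ ≤ 2 * (A ^ (-e) * S) + d ^ (-η) * A ^ (-e) := by
        gcongr
        linarith
    _ ≤ 2 * (2 ^ η * (M + 1) * d ^ (-η) * envelope X d τ e r x) +
          d ^ (-η) * envelope X d τ e r x := by
        have hsum := hX.rpow_mul_sum_erase_le (r := r) (x := x) hη₀ hη he
        have hpeak := rpow_le_envelope X d τ e r x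
        gcongr
    _ = (2 ^ (η + 1) * (M + 1) + 1) * d ^ (-η) * envelope X d τ e r x := by
        rw [Real.rpow_add_one two_ne_zero]
        ring

lemma rpow_mul_mul_sum_le_of_close [DecidableEq ι] (hX : IsSparse X d τ M)
    (hj : ∀ i, ‖x - X j‖ ≤ ‖x - X i‖)
    (hclose : 2 ^ τ * M * ((1 + ‖x - X j‖) / d) ^ τ ≤ 1)
    (hr : (1 + ‖x - X r‖) ^ (-N) < ∑ i ∈ univ.erase r, (1 + ‖x - X i‖) ^ (-N))
    (hp : 0 ≤ p) (hτ : 0 ≤ τ) (hη : τ ≤ η) (hN : η ≤ N) (he : e ≤ (p + 1) * N) :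
    (∑ i ∈ univ.erase r, (1 + ‖x - X i‖) ^ (-N)) ^ p * (1 + ‖x - X r‖) ^ (-N) *
      ∑ i, (1 + ‖x - X i‖) ^ (-η) ≤ 2 ^ (p + 1 + η) * d ^ (-η) * envelope X d τ e r x := by
  have hd := hX.pos
  set A := 1 + ‖x - X j‖ with hA
  have hA₁ : 1 ≤ A := le_add_of_nonneg_right (norm_nonneg _)
  have hA₀ : 0 < A := one_pos.trans_le hA₁
  have hjr : r ≠ j := by
    rintro rfl
    have := hX.sum_erase_rpow_le hj hτ (hη.trans hN)
    nlinarith [Real.rpow_pos_of_pos hA₀ (-N)]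
  have hsum : ∀ a, τ ≤ a → ∑ i, (1 + ‖x - X i‖) ^ (-a) ≤ 2 * A ^ (-a) := fun a ha ↦ by
    refine (hX.sum_rpow_le hj hτ ha).trans ?_
    gcongr
    linarith
  have hothers : ∑ i ∈ univ.erase r, (1 + ‖x - X i‖) ^ (-N) ≤ 2 * A ^ (-N) :=
    (sum_le_univ_sum_of_nonneg fun i ↦ by positivity).trans (hsum N (hη.trans hN))
  have hpeak : (1 + ‖x - X r‖) ^ (-N) ≤
      2 ^ η * d ^ (-η) * coupling d τ (X j - X r) * A ^ (η - N) := by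
    rw [coupling_sub_comm]
    exact hX.rpow_neg_le_coupling_mul_rpow hjr (hj r) (hτ.trans hη) hη hN
  have hc := coupling_nonneg d τ (X j - X r)
  calc _ ≤ (2 * A ^ (-N)) ^ p * (2 ^ η * d ^ (-η) * coupling d τ (X j - X r) * A ^ (η - N)) *
          (2 * A ^ (-η)) := by
        gcongr
        exact hsum η hη
    _ = 2 ^ (p + 1 + η) * d ^ (-η) * (coupling d τ (X j - X r) * A ^ (-((p + 1) * N))) := by
        rw [Real.mul_rpow zero_le_two (by positivity), ← Real.rpow_mul hA₀.le,
          Real.rpow_add two_pos, Real.rpow_add_one two_ne_zero,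
          show -((p + 1) * N) = -N * p + (η - N) + -η by ring, Real.rpow_add hA₀,
          Real.rpow_add hA₀]
        ring
    _ ≤ 2 ^ (p + 1 + η) * d ^ (-η) * (coupling d τ (X j - X r) * A ^ (-e)) := by gcongr
    _ ≤ 2 ^ (p + 1 + η) * d ^ (-η) * envelope X d τ e r x := by
        gcongr
        exact coupling_mul_rpow_le_envelope X d τ e r j x

lemma rpow_neg_le_of_remote (hX : IsSparse X d τ M) (hj : ∀ i, ‖x - X j‖ ≤ ‖x - X i‖)
    (hremote : 1 ≤ 2 ^ τ * M * ((1 + ‖x - X j‖) / d) ^ τ) (hτ : 0 ≤ τ) (hN : τ ≤ N) :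
    (1 + ‖x - X r‖) ^ (-N) ≤ 2 ^ τ * M * ((1 + ‖x - X j‖) / d) ^ τ *
      (coupling d τ (X j - X r) * (1 + ‖x - X j‖) ^ (-N)) := by
  have hd := hX.pos
  rcases eq_or_ne r j with rfl | hrj
  · rw [sub_self, coupling_zero, one_mul]
    exact le_mul_of_one_le_left (by positivity) hremote
  · have hM := hX.one_le j
    have hc := coupling_nonneg d τ (X j - X r)
    calc (1 + ‖x - X r‖) ^ (-N)
        ≤ 2 ^ τ * d ^ (-τ) * coupling d τ (X j - X r) * (1 + ‖x - X j‖) ^ (τ - N) := by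
          rw [coupling_sub_comm]
          exact hX.rpow_neg_le_coupling_mul_rpow hrj (hj r) hτ le_rfl hN
      _ = 2 ^ τ * 1 * ((1 + ‖x - X j‖) / d) ^ τ *
            (coupling d τ (X j - X r) * (1 + ‖x - X j‖) ^ (-N)) := by
          rw [Real.div_rpow (by positivity) hd.le, sub_eq_add_neg τ N,
            Real.rpow_add (by positivity), Real.rpow_neg hd.le]
          ring
      _ ≤ _ := by gcongr

lemma rpow_mul_mul_sum_le_of_remote [DecidableEq ι] {ζ ρ : ℝ} (hX : IsSparse X d τ M)
    (hj : ∀ i, ‖x - X j‖ ≤ ‖x - X i‖)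
    (hremote : 1 ≤ 2 ^ τ * M * ((1 + ‖x - X j‖) / d) ^ τ) (hp : 0 ≤ p) (hτ : 0 < τ) (hN : τ ≤ N)
    (hζ : τ ≤ ζ) (hρ : τ * (p + 2) ≤ ρ) (hρe : ρ + e = (p + 1) * N + ζ) :
    (∑ i ∈ univ.erase r, (1 + ‖x - X i‖) ^ (-N)) ^ p * (1 + ‖x - X r‖) ^ (-N) *
      ∑ i, (1 + ‖x - X i‖) ^ (-ζ) ≤
      2 ^ (p + 1) * (2 ^ τ * M) ^ (ρ / τ) * d ^ (-ρ) * envelope X d τ e r x := by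
  have hd := hX.pos
  have hM := hX.one_le j
  set A := 1 + ‖x - X j‖ with hA
  have hA₁ : 1 ≤ A := le_add_of_nonneg_right (norm_nonneg _)
  have hA₀ : 0 < A := one_pos.trans_le hA₁
  set D := 2 ^ τ * M * (A / d) ^ τ with hD
  have hD₀ : 0 < D := one_pos.trans_le hremote
  have hc := coupling_nonneg d τ (X j - X r)
  have hsum : ∀ a, τ ≤ a → ∑ i, (1 + ‖x - X i‖) ^ (-a) ≤ 2 * D * A ^ (-a) := fun a ha ↦ by
    refine (hX.sum_rpow_le hj hτ.le ha).trans ?_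
    gcongr
    linarith
  have hothers : ∑ i ∈ univ.erase r, (1 + ‖x - X i‖) ^ (-N) ≤ 2 * D * A ^ (-N) :=
    (sum_le_univ_sum_of_nonneg fun i ↦ by positivity).trans (hsum N hN)
  have hDpow : D ^ (ρ / τ) = (2 ^ τ * M) ^ (ρ / τ) * d ^ (-ρ) * A ^ ρ :=
    mul_div_rpow_rpow_div (by positivity) hA₀.le hd.le hτ.ne' ρ
  calc _ ≤ (2 * D * A ^ (-N)) ^ p * (D * (coupling d τ (X j - X r) * A ^ (-N))) *
          (2 * D * A ^ (-ζ)) := by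
        gcongr
        · exact hX.rpow_neg_le_of_remote hj hremote hτ.le hN
        · exact hsum ζ hζ
    _ = 2 ^ (p + 1) * D ^ (p + 2) * (coupling d τ (X j - X r) * A ^ (-((p + 1) * N + ζ))) := by
        rw [Real.mul_rpow (by positivity) (by positivity), Real.mul_rpow zero_le_two hD₀.le,
          ← Real.rpow_mul hA₀.le, Real.rpow_add_one two_ne_zero, Real.rpow_add hD₀, Real.rpow_two,
          show -((p + 1) * N + ζ) = -N * p + -N + -ζ by ring, Real.rpow_add hA₀,
          Real.rpow_add hA₀]
        ring
    _ ≤ 2 ^ (p + 1) * D ^ (ρ / τ) * (coupling d τ (X j - X r) * A ^ (-((p + 1) * N + ζ))) := by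
        have hexp : p + 2 ≤ ρ / τ := (le_div_iff₀ hτ).2 (by linarith)
        gcongr
    _ = 2 ^ (p + 1) * (2 ^ τ * M) ^ (ρ / τ) * d ^ (-ρ) *
          (coupling d τ (X j - X r) * A ^ (-e)) := by
        rw [hDpow, ← hρe, show -(ρ + e) = -ρ + -e by ring, Real.rpow_add hA₀,
          Real.rpow_neg hA₀.le ρ]
        field_simp
    _ ≤ 2 ^ (p + 1) * (2 ^ τ * M) ^ (ρ / τ) * d ^ (-ρ) * envelope X d τ e r x := by
        gcongr
        exact coupling_mul_rpow_le_envelope X d τ e r j x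

end IsSparse

end PeakEstimates

/-! ### Interaction of the peaks in the weighted norm -/

section StarWeight

variable {ι E : Type*} [SeminormedAddCommGroup E] [Fintype ι]

/-- The weight `γ(y) ∑ᵢ (1 + |y - Xⁱ|)^{-e}` defining the norm `‖·‖_*`, with
`γ(y) = min {minᵢ ((1 + |y - Xⁱ|) / λ)^σ, 1}`. -/
noncomputable def starWeight (X : ι → E) (lam σ e : ℝ) (y : E) : ℝ :=
  min (⨅ i, ((1 + ‖y - X i‖) / lam) ^ σ) 1 * ∑ i, (1 + ‖y - X i‖) ^ (-e)

variable {lam : ℝ}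

lemma starWeight_pos [Nonempty ι] (hlam : 0 < lam) (X : ι → E) (σ e : ℝ) (y : E) :
    0 < starWeight X lam σ e y := by
  obtain ⟨i, hi⟩ := exists_eq_ciInf_of_finite (f := fun i ↦ ((1 + ‖y - X i‖) / lam) ^ σ)
  rw [starWeight, ← hi]
  exact mul_pos (lt_min (by positivity) one_pos)
    (sum_pos (fun i _ ↦ by positivity) univ_nonempty)

lemma starWeight_le_sum (X : ι → E) (lam σ e : ℝ) (y : E) :
    starWeight X lam σ e y ≤ ∑ i, (1 + ‖y - X i‖) ^ (-e) :=
  mul_le_of_le_one_left (sum_nonneg fun i _ ↦ by positivity) (min_le_right _ _)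

lemma starWeight_le_rpow_mul_sum (hlam : 0 < lam) (X : ι → E) (σ e : ℝ) (y : E) :
    starWeight X lam σ e y ≤ lam ^ (-σ) * ∑ i, (1 + ‖y - X i‖) ^ (-(e - σ)) := by
  rw [starWeight, mul_sum, mul_sum]
  refine sum_le_sum fun i _ ↦ ?_
  calc min (⨅ i, ((1 + ‖y - X i‖) / lam) ^ σ) 1 * (1 + ‖y - X i‖) ^ (-e)
      ≤ ((1 + ‖y - X i‖) / lam) ^ σ * (1 + ‖y - X i‖) ^ (-e) := by
        gcongr
        exact min_le_of_left_le (ciInf_le (Set.finite_range _).bddBelow i)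
    _ = lam ^ (-σ) * (1 + ‖y - X i‖) ^ (-(e - σ)) := by
        rw [Real.div_rpow (by positivity) hlam.le, neg_sub, sub_eq_add_neg σ,
          Real.rpow_add (by positivity), Real.rpow_neg hlam.le]
        ring

lemma starWeight_le_card (X : ι → E) (lam σ : ℝ) {e : ℝ} (he : 0 ≤ e) (y : E) :
    starWeight X lam σ e y ≤ Fintype.card ι := by
  have hone : ∀ i ∈ univ, (1 + ‖y - X i‖) ^ (-e) ≤ 1 := fun i _ ↦
    Real.rpow_le_one_of_one_le_of_nonpos (le_add_of_nonneg_right (norm_nonneg _)) (by linarith)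
  simpa using (starWeight_le_sum X lam σ e y).trans (sum_le_sum hone)

end StarWeight

/-- The relations between the decay rate `N` of the peaks, the power `p = 4s/N`, the exponents `s`
and `τ` of the weight, the flatness `β` of the coefficient, and the decay rate `e` of the envelope
which are used to estimate the interaction of the peaks. -/
structure ErrorExponents (N s τ p β e : ℝ) : Prop where
  s_pos : 0 < s
  s_le : s ≤ τ
  lt_half : τ < N / 2
  mul_eq : p * N = 4 * s
  flatness_pos : 0 < β
  lt_decay : N + 2 * s < e
  decay_le : e ≤ N + 4 * s
  decay_add_le : e + τ * (p + 1) ≤ 3 / 2 * N + 4 * s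
  decay_add_flatness_le : e + β * ((N / 2 + s) / N) ≤ 3 / 2 * N + 5 * s

lemma exists_errorExponents {N s τ p β : ℝ} (hs : 0 < s) (hsτ : s ≤ τ) (hτ : τ < N / 2)
    (hp : p * N = 4 * s) (hβ₀ : 0 < β) (hβ : β ≤ N + 2 * s) :
    ∃ e, ErrorExponents N s τ p β e := by
  have hN : 0 < N := by linarith
  have hp₀ : 0 < p := pos_of_mul_pos_left (by linarith) hN.le
  have hmid : N + 2 * s < 3 / 2 * N + 4 * s - τ * (p + 1) := by nlinarith
  have hflat : N + 2 * s < 3 / 2 * N + 5 * s - β * ((N / 2 + s) / N) := by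
    have hle : β * ((N / 2 + s) / N) ≤ (N + 2 * s) * ((N / 2 + s) / N) := by gcongr
    have hlt : (N + 2 * s) * ((N / 2 + s) / N) < N / 2 + 3 * s := by
      rw [← mul_div_assoc, div_lt_iff₀ hN]
      nlinarith
    linarith
  refine ⟨min (N + 4 * s) (min (3 / 2 * N + 4 * s - τ * (p + 1))
    (3 / 2 * N + 5 * s - β * ((N / 2 + s) / N))), hs, hsτ, hτ, hp, hβ₀,
    lt_min (by linarith) (lt_min hmid hflat), min_le_left _ _, ?_, ?_⟩
  · linarith [(min_le_right (N + 4 * s) _).trans (min_le_left (3 / 2 * N + 4 * s - τ * (p + 1))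
      (3 / 2 * N + 5 * s - β * ((N / 2 + s) / N)))]
  · linarith [(min_le_right (N + 4 * s) _).trans (min_le_right (3 / 2 * N + 4 * s - τ * (p + 1))
      (3 / 2 * N + 5 * s - β * ((N / 2 + s) / N)))]

namespace ErrorExponents

variable {N s τ p β e : ℝ}

lemma rate_pos (h : ErrorExponents N s τ p β e) : 0 < N := by
  linarith [h.s_pos, h.s_le, h.lt_half]

lemma power_pos (h : ErrorExponents N s τ p β e) : 0 < p :=
  pos_of_mul_pos_left (by linarith [h.mul_eq, h.s_pos]) h.rate_pos.le

lemma power_le_two (h : ErrorExponents N s τ p β e) : p ≤ 2 := by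
  nlinarith [h.mul_eq, h.s_le, h.lt_half, h.rate_pos]

variable {ι E : Type*} [SeminormedAddCommGroup E] [Fintype ι] {X : ι → E} {M d lam : ℝ} {r : ι}
  {x : E}

lemma rpow_mul_mul_starWeight_le [DecidableEq ι] {g : ℝ} (h : ErrorExponents N s τ p β e)
    (hX : IsSparse X d τ M) (hlam : 0 < lam) (hg₀ : 0 ≤ g) (hg₁ : g ≤ 1)
    (hg : g ≤ (1 + ‖x - X r‖) ^ (N / 2 + s) *
        ∑ i ∈ univ.erase r, (1 + ‖x - X i‖) ^ (-(N / 2 + s)) +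
      d ^ (-(N / 2 + s)) * (1 + ‖x - X r‖) ^ (β * ((N / 2 + s) / N))) :
    (1 + ‖x - X r‖) ^ (-(N + 4 * s)) * g * starWeight X lam (τ - s) (N / 2 + τ) x ≤
      (2 ^ (N / 2 + s + 1) * (M + 1) + 1) *
        (lam ^ (-(τ - s)) * d ^ (-(N / 2 + s)) * envelope X d τ e r x) := by
  have hs := h.s_pos
  have hstar := starWeight_le_rpow_mul_sum hlam X (τ - s) (N / 2 + τ) x
  rw [show N / 2 + τ - (τ - s) = N / 2 + s by ring] at hstar
  have hsum := hX.rpow_mul_mul_sum_le (by linarith [h.rate_pos]) (by linarith [h.lt_half])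
    (by linarith [h.lt_decay, h.rate_pos]) h.decay_le
    (by linarith [h.decay_add_flatness_le]) hg₁ hg
  calc _ ≤ (1 + ‖x - X r‖) ^ (-(N + 4 * s)) * g *
        (lam ^ (-(τ - s)) * ∑ i, (1 + ‖x - X i‖) ^ (-(N / 2 + s))) := by gcongr
    _ = lam ^ (-(τ - s)) * ((1 + ‖x - X r‖) ^ (-(N + 4 * s)) * g *
          ∑ i, (1 + ‖x - X i‖) ^ (-(N / 2 + s))) := by ring
    _ ≤ lam ^ (-(τ - s)) * ((2 ^ (N / 2 + s + 1) * (M + 1) + 1) * d ^ (-(N / 2 + s)) *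
          envelope X d τ e r x) := by gcongr
    _ = _ := by ring

lemma rpow_sum_erase_mul_starWeight_le_of_close [DecidableEq ι] {j : ι}
    (h : ErrorExponents N s τ p β e) (hX : IsSparse X d τ M) (hlam : 0 < lam)
    (hr : (1 + ‖x - X r‖) ^ (-N) < ∑ i ∈ univ.erase r, (1 + ‖x - X i‖) ^ (-N))
    (hj : ∀ i, ‖x - X j‖ ≤ ‖x - X i‖)
    (hclose : 2 ^ τ * M * ((1 + ‖x - X j‖) / d) ^ τ ≤ 1) :
    (∑ i ∈ univ.erase r, (1 + ‖x - X i‖) ^ (-N)) ^ p * (1 + ‖x - X r‖) ^ (-N) *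
        starWeight X lam (τ - s) (N / 2 + τ) x ≤
      2 ^ (p + 1 + (N / 2 + s)) *
        (lam ^ (-(τ - s)) * d ^ (-(N / 2 + s)) * envelope X d τ e r x) := by
  have hs := h.s_pos
  set v := ∑ i ∈ univ.erase r, (1 + ‖x - X i‖) ^ (-N)
  have hv : 0 ≤ v := sum_nonneg fun i _ ↦ by positivity
  have hstar := starWeight_le_rpow_mul_sum hlam X (τ - s) (N / 2 + τ) x
  rw [show N / 2 + τ - (τ - s) = N / 2 + s by ring] at hstar
  have hsum := hX.rpow_mul_mul_sum_le_of_close (η := N / 2 + s) (e := e) hj hclose hr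
    h.power_pos.le (hs.le.trans h.s_le) (by linarith [h.lt_half])
    (by linarith [h.s_le, h.lt_half]) (by linarith [h.decay_le, h.mul_eq])
  calc v ^ p * (1 + ‖x - X r‖) ^ (-N) * starWeight X lam (τ - s) (N / 2 + τ) x
      ≤ v ^ p * (1 + ‖x - X r‖) ^ (-N) *
          (lam ^ (-(τ - s)) * ∑ i, (1 + ‖x - X i‖) ^ (-(N / 2 + s))) := by gcongr
    _ = lam ^ (-(τ - s)) * (v ^ p * (1 + ‖x - X r‖) ^ (-N) *
          ∑ i, (1 + ‖x - X i‖) ^ (-(N / 2 + s))) := by ring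
    _ ≤ lam ^ (-(τ - s)) * (2 ^ (p + 1 + (N / 2 + s)) * d ^ (-(N / 2 + s)) *
          envelope X d τ e r x) := by gcongr
    _ = _ := by ring

-- Far from all peaks the truncation `γ ≤ 1` suffices: the gain in `λ` comes from `λ ≤ d`.
lemma rpow_sum_erase_mul_starWeight_le_of_remote [DecidableEq ι] {j : ι}
    (h : ErrorExponents N s τ p β e) (hX : IsSparse X d τ M) (hd : 1 ≤ d) (hlam : 0 < lam)
    (hlamd : lam ≤ d) (hj : ∀ i, ‖x - X j‖ ≤ ‖x - X i‖)
    (hremote : 1 ≤ 2 ^ τ * M * ((1 + ‖x - X j‖) / d) ^ τ) :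
    (∑ i ∈ univ.erase r, (1 + ‖x - X i‖) ^ (-N)) ^ p * (1 + ‖x - X r‖) ^ (-N) *
        starWeight X lam (τ - s) (N / 2 + τ) x ≤
      2 ^ (p + 1) * (2 ^ τ * M) ^ ((3 / 2 * N + 4 * s + τ - e) / τ) *
        (lam ^ (-(τ - s)) * d ^ (-(N / 2 + s)) * envelope X d τ e r x) := by
  have hN := h.rate_pos
  have hτ : 0 < τ := h.s_pos.trans_le h.s_le
  have hM := hX.one_le r
  have henv := envelope_nonneg X d τ e r x
  set v := ∑ i ∈ univ.erase r, (1 + ‖x - X i‖) ^ (-N)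
  have hv : 0 ≤ v := sum_nonneg fun i _ ↦ by positivity
  have hsum := hX.rpow_mul_mul_sum_le_of_remote (r := r) (N := N) (p := p) (e := e)
    (ζ := N / 2 + τ) (ρ := 3 / 2 * N + 4 * s + τ - e) hj hremote h.power_pos.le hτ
    (by linarith [h.lt_half]) (by linarith) (by linarith [h.decay_add_le])
    (by linarith [h.mul_eq])
  have hsplit : d ^ (-(3 / 2 * N + 4 * s + τ - e)) ≤ lam ^ (-(τ - s)) * d ^ (-(N / 2 + s)) :=
    calc d ^ (-(3 / 2 * N + 4 * s + τ - e)) ≤ d ^ (-(τ - s) + -(N / 2 + s)) :=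
          Real.rpow_le_rpow_of_exponent_le hd (by linarith [h.decay_le])
      _ = d ^ (-(τ - s)) * d ^ (-(N / 2 + s)) := Real.rpow_add hX.pos _ _
      _ ≤ lam ^ (-(τ - s)) * d ^ (-(N / 2 + s)) := by
          have := Real.rpow_le_rpow_of_nonpos hlam hlamd (z := -(τ - s)) (by linarith [h.s_le])
          gcongr
  calc v ^ p * (1 + ‖x - X r‖) ^ (-N) * starWeight X lam (τ - s) (N / 2 + τ) x
      ≤ v ^ p * (1 + ‖x - X r‖) ^ (-N) * ∑ i, (1 + ‖x - X i‖) ^ (-(N / 2 + τ)) := by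
        gcongr
        exact starWeight_le_sum X lam _ _ x
    _ ≤ _ := hsum
    _ ≤ 2 ^ (p + 1) * (2 ^ τ * M) ^ ((3 / 2 * N + 4 * s + τ - e) / τ) *
          (lam ^ (-(τ - s)) * d ^ (-(N / 2 + s))) * envelope X d τ e r x := by gcongr
    _ = _ := by ring

lemma rpow_sum_erase_mul_starWeight_le [DecidableEq ι] (h : ErrorExponents N s τ p β e)
    (hX : IsSparse X d τ M) (hd : 1 ≤ d) (hlam : 0 < lam) (hlamd : lam ≤ d)
    (hr : (1 + ‖x - X r‖) ^ (-N) < ∑ i ∈ univ.erase r, (1 + ‖x - X i‖) ^ (-N)) :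
    (∑ i ∈ univ.erase r, (1 + ‖x - X i‖) ^ (-N)) ^ p * (1 + ‖x - X r‖) ^ (-N) *
        starWeight X lam (τ - s) (N / 2 + τ) x ≤
      (2 ^ (p + 1 + (N / 2 + s)) +
          2 ^ (p + 1) * (2 ^ τ * M) ^ ((3 / 2 * N + 4 * s + τ - e) / τ)) *
        (lam ^ (-(τ - s)) * d ^ (-(N / 2 + s)) * envelope X d τ e r x) := by
  have hM := hX.one_le r
  have henv := envelope_nonneg X d τ e r x
  have : Nonempty ι := ⟨r⟩
  obtain ⟨j, hj⟩ := Finite.exists_min fun i ↦ ‖x - X i‖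
  rw [add_mul]
  rcases le_total (2 ^ τ * M * ((1 + ‖x - X j‖) / d) ^ τ) 1 with hclose | hremote
  · exact le_add_of_le_of_nonneg
      (h.rpow_sum_erase_mul_starWeight_le_of_close hX hlam hr hj hclose) (by positivity)
  · exact le_add_of_nonneg_of_le (by positivity)
      (h.rpow_sum_erase_mul_starWeight_le_of_remote hX hd hlam hlamd hj hremote)

variable {B κ : ℝ}

-- The exponent `θ = (N / 2 + s) / N ≤ 1` is chosen so that `λ^{βθ} = d^{Nθ} = d^{N / 2 + s}`.
lemma min_one_rpow_le (h : ErrorExponents N s τ p β e) (hd : 0 < d) (hlam : 0 < lam)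
    (hscale : lam ^ β = d ^ N) (y : E) :
    min 1 (((1 + ‖y‖) / lam) ^ β) ≤
      d ^ (-(N / 2 + s)) * (1 + ‖y‖) ^ (β * ((N / 2 + s) / N)) := by
  have hN := h.rate_pos
  have hθ₀ : 0 ≤ (N / 2 + s) / N := div_nonneg (by linarith [h.s_pos]) hN.le
  have hθ₁ : (N / 2 + s) / N ≤ 1 := (div_le_one hN).2 (by linarith [h.s_le, h.lt_half])
  set t := ((1 + ‖y‖) / lam) ^ β with ht
  have hmin₀ : 0 < min 1 t := lt_min one_pos (by positivity)
  calc min 1 t ≤ min 1 t ^ ((N / 2 + s) / N) := by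
        simpa using Real.rpow_le_rpow_of_exponent_ge hmin₀ (min_le_left _ _) hθ₁
    _ ≤ t ^ ((N / 2 + s) / N) := Real.rpow_le_rpow hmin₀.le (min_le_right _ _) hθ₀
    _ = (1 + ‖y‖) ^ (β * ((N / 2 + s) / N)) / (lam ^ β) ^ ((N / 2 + s) / N) := by
        rw [ht, Real.div_rpow (by positivity) hlam.le,
          Real.div_rpow (by positivity) (by positivity), ← Real.rpow_mul (by positivity)]
    _ = d ^ (-(N / 2 + s)) * (1 + ‖y‖) ^ (β * ((N / 2 + s) / N)) := by
        rw [hscale, ← Real.rpow_mul hd.le, mul_div_cancel₀ _ hN.ne', Real.rpow_neg hd.le]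
        ring

lemma rpow_neg_rpow_mul_rpow_neg (h : ErrorExponents N s τ p β e) {A : ℝ} (hA : 0 < A) :
    (A ^ (-N)) ^ p * A ^ (-N) = A ^ (-(N + 4 * s)) := by
  rw [← Real.rpow_mul hA.le, ← Real.rpow_add hA]
  congr 1
  linear_combination -h.mul_eq

lemma abs_sub_one_mul_starWeight_le {Q U : ℝ} (h : ErrorExponents N s τ p β e)
    (hX : IsSparse X d τ M) (hlam : 0 < lam) (hscale : lam ^ β = d ^ N) (hκ : 0 ≤ κ) (hB : 0 ≤ B)
    (hQ : |Q - 1| ≤ κ * min 1 (((1 + ‖x - X r‖) / lam) ^ β)) (hU₀ : 0 ≤ U)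
    (hU : U ≤ B * (1 + ‖x - X r‖) ^ (-N)) :
    |Q - 1| * U ^ p * (1 + ‖x - X r‖) ^ (-N) * starWeight X lam (τ - s) (N / 2 + τ) x ≤
      κ * B ^ p * (2 ^ (N / 2 + s + 1) * (M + 1) + 1) *
        (lam ^ (-(τ - s)) * d ^ (-(N / 2 + s)) * envelope X d τ e r x) := by
  classical
  have : Nonempty ι := ⟨r⟩
  have hp := h.power_pos
  have hstar := starWeight_pos hlam X (τ - s) (N / 2 + τ) x
  have hg₀ : 0 ≤ min 1 (((1 + ‖x - X r‖) / lam) ^ β) := le_min zero_le_one (by positivity)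
  have hbound := h.rpow_mul_mul_starWeight_le (r := r) (x := x) hX hlam hg₀ (min_le_left _ _)
    (le_add_of_nonneg_of_le (mul_nonneg (by positivity) (sum_nonneg fun i _ ↦ by positivity))
      (h.min_one_rpow_le hX.pos hlam hscale _))
  set g := min 1 (((1 + ‖x - X r‖) / lam) ^ β)
  calc |Q - 1| * U ^ p * (1 + ‖x - X r‖) ^ (-N) * starWeight X lam (τ - s) (N / 2 + τ) x
      ≤ κ * g * (B * (1 + ‖x - X r‖) ^ (-N)) ^ p * (1 + ‖x - X r‖) ^ (-N) *
          starWeight X lam (τ - s) (N / 2 + τ) x := by gcongr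
    _ = κ * B ^ p * ((1 + ‖x - X r‖) ^ (-(N + 4 * s)) * g *
          starWeight X lam (τ - s) (N / 2 + τ) x) := by
        rw [Real.mul_rpow hB (by positivity), ← h.rpow_neg_rpow_mul_rpow_neg (by positivity)]
        ring
    _ ≤ κ * B ^ p * ((2 ^ (N / 2 + s + 1) * (M + 1) + 1) *
          (lam ^ (-(τ - s)) * d ^ (-(N / 2 + s)) * envelope X d τ e r x)) := by gcongr
    _ = _ := by ring

lemma add_rpow_sub_rpow_mul_starWeight_le_of_le [DecidableEq ι] {U V : ℝ}
    (h : ErrorExponents N s τ p β e) (hX : IsSparse X d τ M) (hlam : 0 < lam) (hB : 0 < B)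
    (hU : B⁻¹ * (1 + ‖x - X r‖) ^ (-N) ≤ U) (hU' : U ≤ B * (1 + ‖x - X r‖) ^ (-N)) (hV₀ : 0 ≤ V)
    (hV : V ≤ B * ∑ i ∈ univ.erase r, (1 + ‖x - X i‖) ^ (-N))
    (hr : ∑ i ∈ univ.erase r, (1 + ‖x - X i‖) ^ (-N) ≤ (1 + ‖x - X r‖) ^ (-N)) :
    ((U + V) ^ p - U ^ p) * (1 + ‖x - X r‖) ^ (-N) *
        starWeight X lam (τ - s) (N / 2 + τ) x ≤
      (2 * B ^ 2 + (B ^ 2) ^ 2) * B ^ p * (2 ^ (N / 2 + s + 1) * (M + 1) + 1) *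
        (lam ^ (-(τ - s)) * d ^ (-(N / 2 + s)) * envelope X d τ e r x) := by
  have : Nonempty ι := ⟨r⟩
  have hd := hX.pos
  have hp := h.power_pos
  have hN := h.rate_pos
  have hstar := starWeight_pos hlam X (τ - s) (N / 2 + τ) x
  have hratio := rpow_mul_sum_erase_le_of_sum_erase_le (η := N / 2 + s) hN
    (by linarith [h.s_le, h.lt_half]) hr
  set A := 1 + ‖x - X r‖ with hA
  have hA₀ : 0 < A := by positivity
  set v := ∑ i ∈ univ.erase r, (1 + ‖x - X i‖) ^ (-N)
  have hcancel : A ^ N * A ^ (-N) = 1 := by rw [← Real.rpow_add hA₀, add_neg_cancel, Real.rpow_zero]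
  have hg₀ : 0 ≤ A ^ N * v := mul_nonneg (by positivity) (sum_nonneg fun i _ ↦ by positivity)
  have hg₁ : A ^ N * v ≤ 1 := hcancel ▸ by gcongr
  have hU₀ : 0 < U := lt_of_lt_of_le (by positivity) hU
  have hVU : V ≤ B ^ 2 * (A ^ N * v) * U :=
    calc V ≤ B ^ 2 * (A ^ N * v) * (B⁻¹ * A ^ (-N)) := by
          refine hV.trans_eq ?_
          field_simp
          linear_combination -v * hcancel
      _ ≤ B ^ 2 * (A ^ N * v) * U := by gcongr
  have hbound := h.rpow_mul_mul_starWeight_le (r := r) (x := x) hX hlam hg₀ hg₁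
    (le_add_of_le_of_nonneg hratio (by positivity))
  calc ((U + V) ^ p - U ^ p) * A ^ (-N) * starWeight X lam (τ - s) (N / 2 + τ) x
      ≤ (2 * B ^ 2 + (B ^ 2) ^ 2) * (A ^ N * v) * (B * A ^ (-N)) ^ p * A ^ (-N) *
          starWeight X lam (τ - s) (N / 2 + τ) x := by
        gcongr
        refine (add_rpow_sub_rpow_le hU₀ hV₀ hg₀ hg₁ hVU h.power_le_two).trans ?_
        gcongr
    _ = (2 * B ^ 2 + (B ^ 2) ^ 2) * B ^ p * (A ^ (-(N + 4 * s)) * (A ^ N * v) *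
          starWeight X lam (τ - s) (N / 2 + τ) x) := by
        rw [Real.mul_rpow hB.le (by positivity), ← h.rpow_neg_rpow_mul_rpow_neg hA₀]
        ring
    _ ≤ (2 * B ^ 2 + (B ^ 2) ^ 2) * B ^ p * ((2 ^ (N / 2 + s + 1) * (M + 1) + 1) *
          (lam ^ (-(τ - s)) * d ^ (-(N / 2 + s)) * envelope X d τ e r x)) := by gcongr
    _ = _ := by ring

lemma add_rpow_sub_rpow_mul_starWeight_le_of_lt [DecidableEq ι] {U V : ℝ}
    (h : ErrorExponents N s τ p β e) (hX : IsSparse X d τ M) (hd : 1 ≤ d) (hlam : 0 < lam)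
    (hlamd : lam ≤ d) (hB : 0 < B) (hU₀ : 0 ≤ U) (hU : U ≤ B * (1 + ‖x - X r‖) ^ (-N))
    (hV₀ : 0 ≤ V) (hV : V ≤ B * ∑ i ∈ univ.erase r, (1 + ‖x - X i‖) ^ (-N))
    (hr : (1 + ‖x - X r‖) ^ (-N) < ∑ i ∈ univ.erase r, (1 + ‖x - X i‖) ^ (-N)) :
    ((U + V) ^ p - U ^ p) * (1 + ‖x - X r‖) ^ (-N) *
        starWeight X lam (τ - s) (N / 2 + τ) x ≤
      (2 * B) ^ p * (2 ^ (p + 1 + (N / 2 + s)) +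
          2 ^ (p + 1) * (2 ^ τ * M) ^ ((3 / 2 * N + 4 * s + τ - e) / τ)) *
        (lam ^ (-(τ - s)) * d ^ (-(N / 2 + s)) * envelope X d τ e r x) := by
  have : Nonempty ι := ⟨r⟩
  have hp := h.power_pos
  have hstar := starWeight_pos hlam X (τ - s) (N / 2 + τ) x
  have hbound := h.rpow_sum_erase_mul_starWeight_le hX hd hlam hlamd hr
  set v := ∑ i ∈ univ.erase r, (1 + ‖x - X i‖) ^ (-N)
  have hv : 0 ≤ v := sum_nonneg fun i _ ↦ by positivity
  have hUV : U + V ≤ 2 * B * v := by nlinarith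
  calc ((U + V) ^ p - U ^ p) * (1 + ‖x - X r‖) ^ (-N) * starWeight X lam (τ - s) (N / 2 + τ) x
      ≤ (2 * B * v) ^ p * (1 + ‖x - X r‖) ^ (-N) *
          starWeight X lam (τ - s) (N / 2 + τ) x := by
        gcongr
        refine (sub_le_self _ (by positivity)).trans ?_
        gcongr
    _ = (2 * B) ^ p * (v ^ p * (1 + ‖x - X r‖) ^ (-N) *
          starWeight X lam (τ - s) (N / 2 + τ) x) := by
        rw [Real.mul_rpow (by positivity) hv]
        ring
    _ ≤ (2 * B) ^ p * _ := mul_le_mul_of_nonneg_left hbound (by positivity)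
    _ = _ := by ring

lemma sum_rpow_sub_rpow_mul_starWeight_le {w : ι → ℝ} (h : ErrorExponents N s τ p β e)
    (hX : IsSparse X d τ M) (hd : 1 ≤ d) (hlam : 0 < lam) (hlamd : lam ≤ d) (hB : 0 < B)
    (hw : ∀ i, B⁻¹ * (1 + ‖x - X i‖) ^ (-N) ≤ w i ∧ w i ≤ B * (1 + ‖x - X i‖) ^ (-N)) :
    ((∑ i, w i) ^ p - w r ^ p) * (1 + ‖x - X r‖) ^ (-N) *
        starWeight X lam (τ - s) (N / 2 + τ) x ≤
      ((2 * B ^ 2 + (B ^ 2) ^ 2) * B ^ p * (2 ^ (N / 2 + s + 1) * (M + 1) + 1) +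
          (2 * B) ^ p * (2 ^ (p + 1 + (N / 2 + s)) +
            2 ^ (p + 1) * (2 ^ τ * M) ^ ((3 / 2 * N + 4 * s + τ - e) / τ))) *
        (lam ^ (-(τ - s)) * d ^ (-(N / 2 + s)) * envelope X d τ e r x) := by
  classical
  have hM := hX.one_le r
  have henv := envelope_nonneg X d τ e r x
  have hw₀ : ∀ i, 0 ≤ w i := fun i ↦ le_trans (by positivity) (hw i).1
  have hV₀ : 0 ≤ ∑ i ∈ univ.erase r, w i := sum_nonneg fun i _ ↦ hw₀ i
  have hV : ∑ i ∈ univ.erase r, w i ≤ B * ∑ i ∈ univ.erase r, (1 + ‖x - X i‖) ^ (-N) := by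
    rw [mul_sum]
    exact sum_le_sum fun i _ ↦ (hw i).2
  rw [← add_sum_erase _ _ (mem_univ r), add_mul]
  rcases le_or_gt (∑ i ∈ univ.erase r, (1 + ‖x - X i‖) ^ (-N)) ((1 + ‖x - X r‖) ^ (-N))
    with hle | hlt
  · exact le_add_of_le_of_nonneg (h.add_rpow_sub_rpow_mul_starWeight_le_of_le hX hlam hB
      (hw r).1 (hw r).2 hV₀ hV hle) (by positivity)
  · exact le_add_of_nonneg_of_le (by positivity) (h.add_rpow_sub_rpow_mul_starWeight_le_of_lt
      hX hd hlam hlamd hB (hw₀ r) (hw r).2 hV₀ hV hlt)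

end ErrorExponents

/-- The constant bounding, relative to the envelope, the error made near one peak by the other peaks
and by the coefficient: the three groups of terms come from the points where the given peak
dominates, the points where it does not, and the oscillation of the coefficient. -/
noncomputable def errorConst (N s τ p e M B κ : ℝ) : ℝ :=
  (1 + κ) * ((2 * B ^ 2 + (B ^ 2) ^ 2) * B ^ p * (2 ^ (N / 2 + s + 1) * (M + 1) + 1) +
    (2 * B) ^ p * (2 ^ (p + 1 + (N / 2 + s)) +
      2 ^ (p + 1) * (2 ^ τ * M) ^ ((3 / 2 * N + 4 * s + τ - e) / τ))) +
  κ * B ^ p * (2 ^ (N / 2 + s + 1) * (M + 1) + 1)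

lemma errorConst_pos {M B κ : ℝ} (hM : 0 ≤ M) (hB : 0 < B) (hκ : 0 ≤ κ) (N s τ p e : ℝ) :
    0 < errorConst N s τ p e M B κ := by
  unfold errorConst
  positivity

lemma abs_mul_rpow_sub_rpow_le {Q U V p κ : ℝ} (hU : 0 ≤ U) (hV : 0 ≤ V) (hp : 0 ≤ p)
    (hQ : |Q - 1| ≤ κ) :
    |Q * (U + V) ^ p - U ^ p| ≤ (1 + κ) * ((U + V) ^ p - U ^ p) + |Q - 1| * U ^ p := by
  have hmono : 0 ≤ (U + V) ^ p - U ^ p :=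
    sub_nonneg.2 (Real.rpow_le_rpow hU (le_add_of_nonneg_right hV) hp)
  have hQabs : |Q| ≤ 1 + κ := by
    calc |Q| = |1 + (Q - 1)| := by rw [add_sub_cancel]
      _ ≤ |1| + |Q - 1| := abs_add_le _ _
      _ ≤ 1 + κ := by rw [abs_one]; gcongr
  calc |Q * (U + V) ^ p - U ^ p| = |Q * ((U + V) ^ p - U ^ p) + (Q - 1) * U ^ p| := by ring_nf
    _ ≤ |Q| * ((U + V) ^ p - U ^ p) + |Q - 1| * U ^ p := by
        refine (abs_add_le _ _).trans_eq ?_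
        rw [abs_mul, abs_mul, abs_of_nonneg hmono, abs_of_nonneg (Real.rpow_nonneg hU p)]
    _ ≤ (1 + κ) * ((U + V) ^ p - U ^ p) + |Q - 1| * U ^ p := by gcongr

lemma ErrorExponents.abs_mul_sum_rpow_sub_rpow_mul_starWeight_le {ι E : Type*}
    [SeminormedAddCommGroup E] [Fintype ι] {N s τ p β e M B κ d lam Q : ℝ} {X : ι → E} {r : ι}
    {x : E} {w : ι → ℝ} (h : ErrorExponents N s τ p β e) (hX : IsSparse X d τ M) (hd : 1 ≤ d)
    (hlam : 0 < lam) (hlamd : lam ≤ d) (hscale : lam ^ β = d ^ N) (hB : 0 < B) (hκ : 0 ≤ κ)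
    (hw : ∀ i, B⁻¹ * (1 + ‖x - X i‖) ^ (-N) ≤ w i ∧ w i ≤ B * (1 + ‖x - X i‖) ^ (-N))
    (hQ : |Q - 1| ≤ κ * min 1 (((1 + ‖x - X r‖) / lam) ^ β)) :
    |Q * (∑ i, w i) ^ p - w r ^ p| * (1 + ‖x - X r‖) ^ (-N) *
        starWeight X lam (τ - s) (N / 2 + τ) x ≤
      errorConst N s τ p e M B κ *
        (lam ^ (-(τ - s)) * d ^ (-(N / 2 + s)) * envelope X d τ e r x) := by
  classical
  have : Nonempty ι := ⟨r⟩
  have hstar := starWeight_pos hlam X (τ - s) (N / 2 + τ) x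
  have hw₀ : ∀ i, 0 ≤ w i := fun i ↦ le_trans (by positivity) (hw i).1
  have hQκ : |Q - 1| ≤ κ := hQ.trans (mul_le_of_le_one_right hκ (min_le_left _ _))
  have hsplit := abs_mul_rpow_sub_rpow_le (hw₀ r)
    (sum_nonneg fun i (_ : i ∈ univ.erase r) ↦ hw₀ i) h.power_pos.le hQκ
  rw [add_sum_erase _ _ (mem_univ r)] at hsplit
  have hpeaks := h.sum_rpow_sub_rpow_mul_starWeight_le (r := r) hX hd hlam hlamd hB hw
  have hcoeff := h.abs_sub_one_mul_starWeight_le hX hlam hscale hκ hB.le hQ (hw₀ r) (hw r).2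
  calc |Q * (∑ i, w i) ^ p - w r ^ p| * (1 + ‖x - X r‖) ^ (-N) *
        starWeight X lam (τ - s) (N / 2 + τ) x
      ≤ ((1 + κ) * ((∑ i, w i) ^ p - w r ^ p) + |Q - 1| * w r ^ p) * (1 + ‖x - X r‖) ^ (-N) *
          starWeight X lam (τ - s) (N / 2 + τ) x := by gcongr
    _ = (1 + κ) * (((∑ i, w i) ^ p - w r ^ p) * (1 + ‖x - X r‖) ^ (-N) *
            starWeight X lam (τ - s) (N / 2 + τ) x) +
          |Q - 1| * w r ^ p * (1 + ‖x - X r‖) ^ (-N) *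
            starWeight X lam (τ - s) (N / 2 + τ) x := by ring
    _ ≤ (1 + κ) * (_ * _) + _ * _ :=
        add_le_add (mul_le_mul_of_nonneg_left hpeaks (by positivity)) hcoeff
    _ = _ := by
        rw [errorConst]
        ring

end

/-! ### Integration against the envelope -/

section

open Finset MeasureTheory

-- If `g` is not measurable, then `c • g` is not integrable because `c ≠ 0`, and its Bochner
-- integral has the default value `0`.
lemma norm_integral_smul_le_of_integral_smul_eq_zero {α F : Type*} [MeasurableSpace α]
    [NormedAddCommGroup F] [NormedSpace ℝ F] {μ : Measure α} {c f b₁ b₂ : α → ℝ} {g : α → F}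
    (hc : AEStronglyMeasurable c μ) (hc₀ : ∀ x, c x ≠ 0) (hf : AEStronglyMeasurable f μ)
    (hfg : ∫ x, f x • g x ∂μ = 0) (hb₁ : Integrable b₁ μ) (hle₁ : ∀ x, ‖f x • g x‖ ≤ b₁ x)
    (hb₂ : Integrable b₂ μ) (hle₂ : ∀ x, ‖(c x - f x) • g x‖ ≤ b₂ x) :
    ‖∫ x, c x • g x ∂μ‖ ≤ ∫ x, b₂ x ∂μ := by
  by_cases hg : AEStronglyMeasurable g μ
  · have hfg_int : Integrable (fun x ↦ f x • g x) μ :=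
      hb₁.mono' (hf.smul hg) (Filter.Eventually.of_forall hle₁)
    have hdiff_int : Integrable (fun x ↦ (c x - f x) • g x) μ :=
      hb₂.mono' ((hc.sub hf).smul hg) (Filter.Eventually.of_forall hle₂)
    have hsplit : ∫ x, c x • g x ∂μ = ∫ x, (c x - f x) • g x ∂μ := by
      rw [← add_zero (∫ x, (c x - f x) • g x ∂μ), ← hfg, ← integral_add hdiff_int hfg_int]
      simp only [← add_smul, sub_add_cancel]
    rw [hsplit]
    exact norm_integral_le_of_norm_le hb₂ (Filter.Eventually.of_forall hle₂)
  · have hcg : ¬ Integrable (fun x ↦ c x • g x) μ := fun hint ↦ hg <| by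
      have hinv := (hc.aemeasurable.inv.aestronglyMeasurable).smul hint.aestronglyMeasurable
      exact hinv.congr (Filter.Eventually.of_forall fun x ↦ inv_smul_smul₀ (hc₀ x) (g x))
    rw [integral_undef hcg, norm_zero]
    exact integral_nonneg fun x ↦ (norm_nonneg _).trans (hle₂ x)

namespace ErrorExponents

variable {ι E : Type*} [SeminormedAddCommGroup E] [Fintype ι] {X : ι → E}
  {N s τ p β e d M B κ ζ lam nφ : ℝ} {r : ι} {w : ι → E → ℝ} {Q Z φ : E → ℝ}

lemma abs_rpow_mul_mul_le (h : ErrorExponents N s τ p β e) (hB : 0 ≤ B)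
    (hw₀ : ∀ x, 0 ≤ w r x) (hw : ∀ x, w r x ≤ B * (1 + ‖x - X r‖) ^ (-N))
    (hZ : ∀ x, |Z x| ≤ ζ * (1 + ‖x - X r‖) ^ (-N)) (hn : 0 ≤ nφ)
    (hφ : ∀ x, |φ x| ≤ nφ * starWeight X lam (τ - s) (N / 2 + τ) x) (x : E) :
    |w r x ^ p * (Z x * φ x)| ≤
      B ^ p * ζ * nφ * Fintype.card ι * (1 + ‖x - X r‖) ^ (-(N + 4 * s)) := by
  have hp := h.power_pos
  have hcard := starWeight_le_card X lam (τ - s) (e := N / 2 + τ)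
    (by linarith [h.s_pos, h.s_le, h.rate_pos]) x
  have hZ₀ : 0 ≤ ζ * (1 + ‖x - X r‖) ^ (-N) := (abs_nonneg _).trans (hZ x)
  have hw_nonneg := hw₀ x
  rw [abs_mul, abs_mul, abs_of_nonneg (Real.rpow_nonneg hw_nonneg p)]
  calc w r x ^ p * (|Z x| * |φ x|)
      ≤ (B * (1 + ‖x - X r‖) ^ (-N)) ^ p *
          ((ζ * (1 + ‖x - X r‖) ^ (-N)) * (nφ * Fintype.card ι)) := by
        gcongr
        · exact hw x
        · exact hZ x
        · exact (hφ x).trans (by gcongr)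
    _ = B ^ p * ζ * nφ * Fintype.card ι *
          (((1 + ‖x - X r‖) ^ (-N)) ^ p * (1 + ‖x - X r‖) ^ (-N)) := by
        rw [Real.mul_rpow hB (by positivity)]
        ring
    _ = _ := by rw [h.rpow_neg_rpow_mul_rpow_neg (by positivity)]

lemma abs_sub_mul_mul_le (h : ErrorExponents N s τ p β e) (hX : IsSparse X d τ M) (hd : 1 ≤ d)
    (hlam : 0 < lam) (hlamd : lam ≤ d) (hscale : lam ^ β = d ^ N) (hB : 0 < B) (hκ : 0 ≤ κ)
    (hw : ∀ x i, B⁻¹ * (1 + ‖x - X i‖) ^ (-N) ≤ w i x ∧ w i x ≤ B * (1 + ‖x - X i‖) ^ (-N))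
    (hQ : ∀ x, |Q x - 1| ≤ κ * min 1 (((1 + ‖x - X r‖) / lam) ^ β)) (hζ : 0 ≤ ζ)
    (hZ : ∀ x, |Z x| ≤ ζ * (1 + ‖x - X r‖) ^ (-N)) (hn : 0 ≤ nφ)
    (hφ : ∀ x, |φ x| ≤ nφ * starWeight X lam (τ - s) (N / 2 + τ) x) (x : E) :
    |(Q x * (∑ i, w i x) ^ p - w r x ^ p) * (Z x * φ x)| ≤
      ζ * nφ * (errorConst N s τ p e M B κ *
        (lam ^ (-(τ - s)) * d ^ (-(N / 2 + s)) * envelope X d τ e r x)) := by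
  refine le_trans ?_ (mul_le_mul_of_nonneg_left
    (h.abs_mul_sum_rpow_sub_rpow_mul_starWeight_le hX hd hlam hlamd hscale hB hκ (hw x) (hQ x))
    (mul_nonneg hζ hn))
  calc |(Q x * (∑ i, w i x) ^ p - w r x ^ p) * (Z x * φ x)|
      ≤ |Q x * (∑ i, w i x) ^ p - w r x ^ p| * ((ζ * (1 + ‖x - X r‖) ^ (-N)) *
          (nφ * starWeight X lam (τ - s) (N / 2 + τ) x)) := by
        rw [abs_mul, abs_mul]
        gcongr
        · exact hZ x
        · exact hφ x
    _ = _ := by ring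

end ErrorExponents

section Integration

variable {ι E : Type*} [NormedAddCommGroup E] [NormedSpace ℝ E] [FiniteDimensional ℝ E]
  [MeasurableSpace E] [BorelSpace E] [Fintype ι] {μ : Measure E} [μ.IsAddHaarMeasure]
  {X : ι → E} {d τ e : ℝ}

lemma integrable_envelope (X : ι → E) (d τ : ℝ) (r : ι) (he : Module.finrank ℝ E < e) :
    Integrable (envelope X d τ e r) μ :=
  integrable_finsetSum _ fun i _ ↦
    ((integrable_one_add_norm he).comp_sub_right (X i)).const_mul (coupling d τ (X i - X r))

lemma integral_envelope_le {M : ℝ} (hX : IsSparse X d τ M) (r : ι)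
    (he : Module.finrank ℝ E < e) :
    ∫ x, envelope X d τ e r x ∂μ ≤ M * ∫ x, (1 + ‖x‖) ^ (-e) ∂μ := by
  have hint : ∀ i ∈ univ, Integrable
      (fun x ↦ coupling d τ (X i - X r) * (1 + ‖x - X i‖) ^ (-e)) μ := fun i _ ↦
    ((integrable_one_add_norm he).comp_sub_right (X i)).const_mul (coupling d τ (X i - X r))
  have hshift : ∀ i, ∫ x, (1 + ‖x - X i‖) ^ (-e) ∂μ = ∫ x, (1 + ‖x‖) ^ (-e) ∂μ := fun i ↦
    integral_sub_right_eq_self (fun x ↦ (1 + ‖x‖) ^ (-e)) (X i)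
  calc ∫ x, envelope X d τ e r x ∂μ
      = (∑ i, coupling d τ (X i - X r)) * ∫ x, (1 + ‖x‖) ^ (-e) ∂μ := by
        simp only [envelope, integral_finsetSum _ hint, integral_const_mul, hshift, sum_mul]
    _ ≤ M * ∫ x, (1 + ‖x‖) ^ (-e) ∂μ := by
        gcongr
        exact hX.sum_coupling_le r

variable {N s p β M B κ ζ lam nφ : ℝ} {r : ι} {w : ι → E → ℝ} {Q Z φ : E → ℝ}

theorem ErrorExponents.abs_integral_le (h : ErrorExponents N s τ p β e)
    (hdim : Module.finrank ℝ E ≤ N + 2 * s) (hX : IsSparse X d τ M) (hd : 1 ≤ d) (hlam : 0 < lam)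
    (hlamd : lam ≤ d) (hscale : lam ^ β = d ^ N) (hB : 0 < B) (hκ : 0 ≤ κ)
    (hw_meas : ∀ i, Measurable (w i))
    (hw : ∀ x i, B⁻¹ * (1 + ‖x - X i‖) ^ (-N) ≤ w i x ∧ w i x ≤ B * (1 + ‖x - X i‖) ^ (-N))
    (hQ_meas : Measurable Q) (hQ₀ : ∀ x, Q x ≠ 0)
    (hQ : ∀ x, |Q x - 1| ≤ κ * min 1 (((1 + ‖x - X r‖) / lam) ^ β))
    (hZ : ∀ x, |Z x| ≤ ζ * (1 + ‖x - X r‖) ^ (-N))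
    (hφ : ∀ x, |φ x| ≤ nφ * starWeight X lam (τ - s) (N / 2 + τ) x)
    (horth : ∫ x, w r x ^ p * Z x * φ x ∂μ = 0) :
    |∫ x, Q x * (∑ i, w i x) ^ p * Z x * φ x ∂μ| ≤
      errorConst N s τ p e M B κ * ζ * (M * ∫ x : E, (1 + ‖x‖) ^ (-e) ∂μ) * nφ *
        lam ^ (-(τ - s)) * d ^ (-(N / 2 + s)) := by
  have : Nonempty ι := ⟨r⟩
  have hs := h.s_pos
  have hstar := starWeight_pos hlam X (τ - s) (N / 2 + τ)
  have hn : 0 ≤ nφ := nonneg_of_mul_nonneg_left ((abs_nonneg _).trans (hφ 0)) (hstar 0)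
  have hζ : 0 ≤ ζ := nonneg_of_mul_nonneg_left ((abs_nonneg _).trans (hZ 0)) (by positivity)
  have hw₀ : ∀ x i, 0 < w i x := fun x i ↦ lt_of_lt_of_le (by positivity) (hw x i).1
  have he : Module.finrank ℝ E < e := hdim.trans_lt h.lt_decay
  have hC := errorConst_pos (zero_le_one.trans (hX.one_le r)) hB hκ N s τ p e
  have hbound := norm_integral_smul_le_of_integral_smul_eq_zero (μ := μ)
    (c := fun x ↦ Q x * (∑ i, w i x) ^ p) (f := fun x ↦ w r x ^ p) (g := fun x ↦ Z x * φ x)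
    (hQ_meas.mul ((Finset.measurable_sum _ fun i _ ↦ hw_meas i).pow_const p)).aestronglyMeasurable
    (fun x ↦ mul_ne_zero (hQ₀ x)
      (Real.rpow_pos_of_pos (sum_pos (fun i _ ↦ hw₀ x i) univ_nonempty) p).ne')
    ((hw_meas r).pow_const p).aestronglyMeasurable
    (by simpa only [smul_eq_mul, mul_assoc] using horth)
    (((integrable_one_add_norm (by linarith)).comp_sub_right (X r)).const_mul _)
    (h.abs_rpow_mul_mul_le hB.le (fun x ↦ (hw₀ x r).le) (fun x ↦ (hw x r).2) hZ hn hφ)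
    ((((integrable_envelope X d τ r he).const_mul _).const_mul _).const_mul _)
    (h.abs_sub_mul_mul_le hX hd hlam hlamd hscale hB hκ hw hQ hζ hZ hn hφ)
  simp only [smul_eq_mul, ← mul_assoc, Real.norm_eq_abs] at hbound
  refine hbound.trans ?_
  rw [integral_const_mul]
  calc _ ≤ _ * (M * ∫ x : E, (1 + ‖x‖) ^ (-e) ∂μ) := by
        gcongr
        exact integral_envelope_le hX r he
    _ = _ := by ring

end Integration

end

/-! ### Bubbles -/

/-- The standard bubble `U_{P,Λ}` of decay rate `N`, centred at `P` with concentration `Λ`; the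
critical bubble of the fractional Laplacian `(-Δ)^s` on `ℝⁿ` has `N = n - 2s`. -/
noncomputable def bubble {E : Type*} [SeminormedAddCommGroup E] (C₀ N : ℝ) (P : E) (Λ : ℝ)
    (x : E) : ℝ :=
  C₀ * (Λ / (1 + Λ ^ 2 * ‖x - P‖ ^ 2)) ^ (N / 2)

/-- A constant comparing `bubble C₀ N P Λ x` with `(1 + ‖x - X‖) ^ (-N)` from both sides, for all
`P` within distance one of `X` and all `Λ > 0` with `Λ + Λ⁻¹ ≤ L`. -/
noncomputable def bubbleConst (C₀ N L : ℝ) : ℝ :=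
  (C₀ + C₀⁻¹) * (8 * L) ^ (N / 2)

lemma bubbleConst_pos {C₀ L : ℝ} (hC₀ : 0 < C₀) (hL : 0 < L) (N : ℝ) : 0 < bubbleConst C₀ N L := by
  unfold bubbleConst
  positivity

lemma div_one_add_sq_mul_sq_le {Λ L A ρ : ℝ} (hΛ : 0 < Λ) (hL : Λ + Λ⁻¹ ≤ L) (hA : 0 < A)
    (hAρ : A ≤ 2 * (1 + ρ)) : Λ / (1 + Λ ^ 2 * ρ ^ 2) ≤ 8 * L * (A ^ 2)⁻¹ := by
  have hinv := inv_pos.2 hΛ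
  rw [← div_eq_mul_inv, div_le_div_iff₀ (by positivity) (by positivity)]
  calc Λ * A ^ 2 ≤ Λ * (2 * (1 + ρ)) ^ 2 := by gcongr
    _ ≤ 8 * (Λ + Λ * ρ ^ 2) := by nlinarith [mul_nonneg hΛ.le (sq_nonneg (ρ - 1))]
    _ ≤ 8 * ((Λ + Λ⁻¹) * (1 + Λ ^ 2 * ρ ^ 2)) := by
        have hexpand : (Λ + Λ⁻¹) * (1 + Λ ^ 2 * ρ ^ 2) =
            Λ + Λ * ρ ^ 2 + Λ⁻¹ + Λ ^ 3 * ρ ^ 2 := by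
          field_simp
          ring
        rw [hexpand]
        nlinarith [mul_nonneg (pow_nonneg hΛ.le 3) (sq_nonneg ρ)]
    _ ≤ 8 * (L * (1 + Λ ^ 2 * ρ ^ 2)) := by gcongr
    _ = _ := by ring

lemma le_div_one_add_sq_mul_sq {Λ L A ρ : ℝ} (hΛ : 0 < Λ) (hL : Λ + Λ⁻¹ ≤ L) (hρ : 0 ≤ ρ)
    (hρA : 1 + ρ ≤ 2 * A) : (8 * L)⁻¹ * (A ^ 2)⁻¹ ≤ Λ / (1 + Λ ^ 2 * ρ ^ 2) := by
  have hinv := inv_pos.2 hΛ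
  have hA : 0 < A := by linarith
  have hL₀ : 0 < L := by linarith
  rw [← mul_inv, ← one_div, div_le_div_iff₀ (by positivity) (by positivity)]
  calc 1 * (1 + Λ ^ 2 * ρ ^ 2) ≤ Λ * ((Λ + Λ⁻¹) * (1 + ρ) ^ 2) := by
        have hexpand : Λ * ((Λ + Λ⁻¹) * (1 + ρ) ^ 2) = (Λ ^ 2 + 1) * (1 + ρ) ^ 2 := by
          field_simp
        rw [hexpand]
        nlinarith [mul_nonneg (sq_nonneg Λ) hρ, sq_nonneg ρ, sq_nonneg Λ]
    _ ≤ Λ * (L * (2 * A) ^ 2) := by gcongr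
    _ ≤ Λ * (8 * L * A ^ 2) := by nlinarith [mul_pos (mul_pos hΛ hL₀) (pow_pos hA 2)]

lemma mul_inv_sq_rpow_half {c A : ℝ} (hc : 0 ≤ c) (hA : 0 ≤ A) (N : ℝ) :
    (c * (A ^ 2)⁻¹) ^ (N / 2) = c ^ (N / 2) * A ^ (-N) := by
  rw [Real.mul_rpow hc (by positivity), Real.inv_rpow (by positivity), ← Real.rpow_natCast_mul hA,
    Real.rpow_neg hA]
  congr 3
  push_cast
  ring

section Normed

variable {E : Type*} [SeminormedAddCommGroup E] {C₀ N L Λ : ℝ} {P X : E}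

lemma bubble_nonneg (hC₀ : 0 ≤ C₀) (hΛ : 0 ≤ Λ) (N : ℝ) (P x : E) : 0 ≤ bubble C₀ N P Λ x := by
  unfold bubble
  positivity

lemma measurable_bubble [MeasurableSpace E] [OpensMeasurableSpace E] (C₀ N : ℝ) (P : E) (Λ : ℝ) :
    Measurable (bubble C₀ N P Λ) := by
  have hnorm : Measurable fun x : E ↦ ‖x - P‖ := (by fun_prop : Continuous _).measurable
  unfold bubble
  fun_prop

lemma bubble_le (hC₀ : 0 < C₀) (hN : 0 ≤ N) (hΛ : 0 < Λ) (hL : Λ + Λ⁻¹ ≤ L) (hPX : ‖P - X‖ ≤ 1)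
    (x : E) : bubble C₀ N P Λ x ≤ bubbleConst C₀ N L * (1 + ‖x - X‖) ^ (-N) := by
  have hL₀ : 0 ≤ L := by linarith [inv_pos.2 hΛ]
  have hAρ : 1 + ‖x - X‖ ≤ 2 * (1 + ‖x - P‖) := by
    linarith [norm_sub_le_norm_sub_add_norm_sub x P X, norm_nonneg (x - P)]
  calc bubble C₀ N P Λ x ≤ C₀ * (8 * L * ((1 + ‖x - X‖) ^ 2)⁻¹) ^ (N / 2) := by
        unfold bubble
        gcongr
        exact div_one_add_sq_mul_sq_le hΛ hL (by positivity) hAρ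
    _ = C₀ * (8 * L) ^ (N / 2) * (1 + ‖x - X‖) ^ (-N) := by
        rw [mul_inv_sq_rpow_half (by positivity) (by positivity), mul_assoc]
    _ ≤ bubbleConst C₀ N L * (1 + ‖x - X‖) ^ (-N) := by
        unfold bubbleConst
        gcongr
        exact le_add_of_nonneg_right (inv_nonneg.2 hC₀.le)

lemma le_bubble (hC₀ : 0 < C₀) (hN : 0 ≤ N) (hΛ : 0 < Λ) (hL : Λ + Λ⁻¹ ≤ L) (hPX : ‖P - X‖ ≤ 1)
    (x : E) : (bubbleConst C₀ N L)⁻¹ * (1 + ‖x - X‖) ^ (-N) ≤ bubble C₀ N P Λ x := by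
  have hL₀ : 0 < L := by linarith [inv_pos.2 hΛ]
  have hρA : 1 + ‖x - P‖ ≤ 2 * (1 + ‖x - X‖) := by
    linarith [norm_sub_le_norm_sub_add_norm_sub x X P, norm_nonneg (x - X), norm_sub_rev X P]
  calc (bubbleConst C₀ N L)⁻¹ * (1 + ‖x - X‖) ^ (-N)
      ≤ C₀ * (8 * L)⁻¹ ^ (N / 2) * (1 + ‖x - X‖) ^ (-N) := by
        unfold bubbleConst
        rw [mul_inv, Real.inv_rpow (by positivity)]
        gcongr
        exact inv_le_of_inv_le₀ hC₀ (le_add_of_nonneg_left hC₀.le)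
    _ = C₀ * ((8 * L)⁻¹ * ((1 + ‖x - X‖) ^ 2)⁻¹) ^ (N / 2) := by
        rw [mul_inv_sq_rpow_half (by positivity) (by positivity), mul_assoc]
    _ ≤ bubble C₀ N P Λ x := by
        unfold bubble
        gcongr
        exact le_div_one_add_sq_mul_sq hΛ hL (norm_nonneg _) hρA

end Normed

lemma abs_deriv_const_mul_rpow_le {g : ℝ → ℝ} {g' t C₀ c q : ℝ} (hg : HasDerivAt g g' t)
    (hgt : 0 < g t) (hC₀ : 0 ≤ C₀) (hq : 0 ≤ q) (hg' : |g'| ≤ c * g t) :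
    |deriv (fun b ↦ C₀ * g b ^ q) t| ≤ q * c * (C₀ * g t ^ q) := by
  rw [((hg.rpow_const (p := q) (Or.inl hgt.ne')).const_mul C₀).deriv, abs_mul, abs_mul, abs_mul,
    abs_of_nonneg hC₀, abs_of_nonneg hq, abs_of_pos (Real.rpow_pos_of_pos hgt _)]
  calc C₀ * (|g'| * q * g t ^ (q - 1)) ≤ C₀ * (c * g t * q * g t ^ (q - 1)) := by gcongr
    _ = q * c * (C₀ * (g t ^ (q - 1) * g t)) := by ring
    _ = q * c * (C₀ * g t ^ q) := by rw [← Real.rpow_add_one hgt.ne', sub_add_cancel]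

lemma abs_deriv_bubble_concentration_le {E : Type*} [SeminormedAddCommGroup E] {C₀ N Λ : ℝ}
    (hC₀ : 0 ≤ C₀) (hN : 0 ≤ N) (hΛ : 0 < Λ) (P x : E) :
    |deriv (fun b ↦ bubble C₀ N P b x) Λ| ≤ N / 2 * Λ⁻¹ * bubble C₀ N P Λ x := by
  set ρ := ‖x - P‖
  have hden : 0 < 1 + Λ ^ 2 * ρ ^ 2 := by positivity
  have hderiv : HasDerivAt (fun b ↦ b / (1 + b ^ 2 * ρ ^ 2))
      ((1 - Λ ^ 2 * ρ ^ 2) / (1 + Λ ^ 2 * ρ ^ 2) ^ 2) Λ := by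
    refine ((hasDerivAt_id' Λ).fun_div
      (((hasDerivAt_pow 2 Λ).mul_const (ρ ^ 2)).const_add 1) hden.ne').congr_deriv ?_
    push_cast
    ring
  refine abs_deriv_const_mul_rpow_le hderiv (by positivity) hC₀ (by positivity) ?_
  have hnum : |1 - Λ ^ 2 * ρ ^ 2| ≤ 1 + Λ ^ 2 * ρ ^ 2 := by
    rw [abs_le]
    constructor <;> nlinarith [sq_nonneg (Λ * ρ)]
  calc |(1 - Λ ^ 2 * ρ ^ 2) / (1 + Λ ^ 2 * ρ ^ 2) ^ 2|
      ≤ (1 + Λ ^ 2 * ρ ^ 2) / (1 + Λ ^ 2 * ρ ^ 2) ^ 2 := by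
        rw [abs_div, abs_of_pos (pow_pos hden 2)]
        gcongr
    _ = Λ⁻¹ * (Λ / (1 + Λ ^ 2 * ρ ^ 2)) := by
        field_simp

lemma abs_deriv_bubble_center_le {E : Type*} [NormedAddCommGroup E] [InnerProductSpace ℝ E]
    {C₀ N Λ : ℝ} {v : E} (hC₀ : 0 ≤ C₀) (hN : 0 ≤ N) (hΛ : 0 < Λ) (hv : ‖v‖ ≤ 1) (P x : E) :
    |deriv (fun b : ℝ ↦ bubble C₀ N (P + b • v) Λ x) 0| ≤ N / 2 * Λ * bubble C₀ N P Λ x := by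
  have hline : HasDerivAt (fun b : ℝ ↦ x - (P + b • v)) (-v) 0 := by
    simpa only [one_smul] using
      (((hasDerivAt_id' (0 : ℝ)).smul_const v).const_add P).const_sub x
  have hden : HasDerivAt (fun b : ℝ ↦ 1 + Λ ^ 2 * ‖x - (P + b • v)‖ ^ 2)
      (Λ ^ 2 * (2 * inner ℝ (x - P) (-v))) 0 := by
    simpa only [zero_smul, add_zero] using (hline.norm_sq.const_mul (Λ ^ 2)).const_add 1
  have hpos : 0 < 1 + Λ ^ 2 * ‖x - P‖ ^ 2 := by positivity
  have hderiv : HasDerivAt (fun b : ℝ ↦ Λ / (1 + Λ ^ 2 * ‖x - (P + b • v)‖ ^ 2))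
      (Λ * (-(Λ ^ 2 * (2 * inner ℝ (x - P) (-v))) / (1 + Λ ^ 2 * ‖x - P‖ ^ 2) ^ 2)) 0 := by
    simpa only [zero_smul, add_zero, div_eq_mul_inv] using
      (hden.fun_inv (by positivity)).const_mul Λ
  have hinner : |inner ℝ (x - P) (-v)| ≤ ‖x - P‖ :=
    (abs_real_inner_le_norm _ _).trans <| by
      simpa only [norm_neg, mul_one] using mul_le_mul_of_nonneg_left hv (norm_nonneg (x - P))
  have hbound : |Λ * (-(Λ ^ 2 * (2 * inner ℝ (x - P) (-v))) / (1 + Λ ^ 2 * ‖x - P‖ ^ 2) ^ 2)| ≤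
      Λ * (Λ / (1 + Λ ^ 2 * ‖x - P‖ ^ 2)) := by
    rw [abs_mul, abs_of_pos hΛ, abs_div, abs_neg, abs_mul, abs_mul, abs_of_pos (pow_pos hΛ 2),
      abs_two, abs_of_pos (pow_pos hpos 2)]
    gcongr Λ * ?_
    calc Λ ^ 2 * (2 * |inner ℝ (x - P) (-v)|) / (1 + Λ ^ 2 * ‖x - P‖ ^ 2) ^ 2
        ≤ Λ * (1 + Λ ^ 2 * ‖x - P‖ ^ 2) / (1 + Λ ^ 2 * ‖x - P‖ ^ 2) ^ 2 := by
          gcongr ?_ / _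
          nlinarith [mul_le_mul_of_nonneg_left hinner (sq_nonneg Λ),
            mul_nonneg hΛ.le (sq_nonneg (Λ * ‖x - P‖ - 1))]
      _ = Λ / (1 + Λ ^ 2 * ‖x - P‖ ^ 2) := by field_simp
  simpa only [bubble, zero_smul, add_zero] using
    abs_deriv_const_mul_rpow_le (c := Λ) (q := N / 2) hderiv (by positivity) hC₀
      (by positivity) (by simpa only [zero_smul, add_zero] using hbound)

/-! ### Lattices and periodic coefficients -/

section

open Finset

section LatticeFamilies

variable {E : Type*} [NormedAddCommGroup E] [NormedSpace ℝ E] [FiniteDimensional ℝ E]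
  {L : Submodule ℤ E} {τ : ℝ}

lemma summable_coupling_of_one_le_norm (hL : ∀ z ∈ L, z ≠ 0 → 1 ≤ ‖z‖)
    (hτ : Module.finrank ℤ L < τ) : Summable fun z : L ↦ coupling 1 τ (z : E) := by
  have : DiscreteTopology L := .of_forall_le_norm one_pos fun z hz ↦
    hL z z.2 (by simpa only [ne_eq, ZeroMemClass.coe_eq_zero] using hz)
  refine (summable_congr_cofinite ?_).1 (ZLattice.summable_norm_rpow L (-τ) (neg_lt_neg hτ))
  filter_upwards [(Set.finite_singleton (0 : L)).compl_mem_cofinite] with z hz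
  have hone : 1 ≤ ‖(z : E)‖ := hL z z.2 (by simpa using hz)
  rw [coupling, div_one, max_eq_right hone, Submodule.coe_norm]

lemma isSparse_of_mem_lattice {ι : Type*} [Fintype ι] {X : ι → E} {d : ℝ}
    (hL : ∀ z ∈ L, z ≠ 0 → 1 ≤ ‖z‖) (hτ : Module.finrank ℤ L < τ) (hd : 0 < d)
    (hX : Function.Injective X) (hXL : ∀ i, ∃ z ∈ L, X i = d • z) :
    IsSparse X d τ (∑' z : L, coupling 1 τ (z : E)) := by
  choose z hz hXz using hXL
  have hdiff : ∀ i j, X i - X j = d • (z i - z j) := fun i j ↦ by rw [hXz, hXz, smul_sub]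
  refine ⟨hd, fun i j hij ↦ ?_, fun j ↦ ?_⟩
  · have hne : z i - z j ≠ 0 := sub_ne_zero.2 fun h ↦ hij <| hX <| by rw [hXz, hXz, h]
    rw [hdiff, norm_smul, Real.norm_of_nonneg hd.le]
    exact le_mul_of_one_le_right hd.le (hL _ (L.sub_mem (hz i) (hz j)) hne)
  · let shift : ι → L := fun i ↦ ⟨z i - z j, L.sub_mem (hz i) (hz j)⟩
    have hshift : Function.Injective shift := fun i i' h ↦ hX <| by
      rw [hXz, hXz, sub_left_injective (congrArg Subtype.val h)]
    calc ∑ i, coupling d τ (X i - X j) = ∑ i, coupling 1 τ (shift i : E) := by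
          refine sum_congr rfl fun i _ ↦ ?_
          rw [coupling, coupling, hdiff, norm_smul, Real.norm_of_nonneg hd.le,
            mul_div_cancel_left₀ _ hd.ne', div_one]
      _ = ∑ z ∈ univ.map ⟨shift, hshift⟩, coupling 1 τ (z : E) :=
          (sum_map univ ⟨shift, hshift⟩ fun z : L ↦ coupling 1 τ (z : E)).symm
      _ ≤ ∑' z : L, coupling 1 τ (z : E) :=
          (summable_coupling_of_one_le_norm hL hτ).sum_le_tsum _
            fun z _ ↦ coupling_nonneg 1 τ _

end LatticeFamilies

/-- The lattice `ℤ^k × {0}` in `ℝⁿ`, for `k ≤ n`. -/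
def coordinateLattice (n k : ℕ) : Submodule ℤ (EuclideanSpace ℝ (Fin n)) :=
  Submodule.span ℤ ((fun j ↦ EuclideanSpace.single j 1) '' {j : Fin n | (j : ℕ) < k})

namespace coordinateLattice

variable {n k : ℕ} {z : EuclideanSpace ℝ (Fin n)}

lemma finrank_le (n k : ℕ) : Module.finrank ℤ (coordinateLattice n k) ≤ k := by
  classical
  have hcard : #{j : Fin n | (j : ℕ) < k} ≤ k := by
    simpa only [card_range] using
      card_le_card_of_injOn (t := range k) (fun j : Fin n ↦ (j : ℕ)) (by simp [Set.MapsTo])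
        Fin.val_injective.injOn
  rw [coordinateLattice, ← coe_filter_univ, ← coe_image]
  exact (finrank_span_finset_le_card _).trans (card_image_le.trans hcard)

lemma exists_apply_eq_intCast (hz : z ∈ coordinateLattice n k) (j : Fin n) :
    ∃ q : ℤ, z j = q := by
  induction hz using Submodule.span_induction with
  | mem _ h =>
    obtain ⟨i, -, rfl⟩ := h
    exact ⟨if j = i then 1 else 0, by simp⟩
  | zero => exact ⟨0, by simp⟩
  | add _ _ _ _ hx hy =>
    obtain ⟨p, hp⟩ := hx
    obtain ⟨q, hq⟩ := hy
    exact ⟨p + q, by simp [hp, hq]⟩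
  | smul a _ _ hx =>
    obtain ⟨q, hq⟩ := hx
    exact ⟨a * q, by simp [hq]⟩

lemma one_le_norm (hz : z ∈ coordinateLattice n k) (hz₀ : z ≠ 0) : 1 ≤ ‖z‖ := by
  obtain ⟨j, hj⟩ : ∃ j, z j ≠ 0 := by
    contrapose! hz₀
    exact PiLp.ext hz₀
  obtain ⟨q, hq⟩ := exists_apply_eq_intCast hz j
  calc (1 : ℝ) ≤ |(q : ℝ)| := by
        exact_mod_cast Int.one_le_abs (by simpa only [hq, ne_eq, Int.cast_eq_zero] using hj)
    _ = ‖z j‖ := by rw [hq, Real.norm_eq_abs]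
    _ ≤ ‖z‖ := PiLp.norm_apply_le z j

lemma mem_of_apply_eq_intCast {q : Fin n → ℤ} (hq : ∀ j : Fin n, k ≤ (j : ℕ) → q j = 0)
    (hz : ∀ j, z j = q j) : z ∈ coordinateLattice n k := by
  have hsum : z = ∑ j, q j • EuclideanSpace.single j 1 := by
    ext j
    simp [hz, Pi.single_apply]
  rw [hsum]
  refine Submodule.sum_mem _ fun j _ ↦ ?_
  obtain hj | hj := lt_or_ge (j : ℕ) k
  · exact Submodule.smul_mem _ _ (Submodule.subset_span ⟨j, hj, rfl⟩)
  · rw [hq j hj, zero_smul]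
    exact Submodule.zero_mem _

end coordinateLattice

lemma latticeEnum.exists_mem_coordinateLattice {n k m : ℕ} {d : ℝ}
    {X : Fin ((m + 1) ^ k) → EuclideanSpace ℝ (Fin n)} (hX : latticeEnum n k m d X)
    (i : Fin ((m + 1) ^ k)) : ∃ z ∈ coordinateLattice n k, X i = d • z := by
  obtain ⟨q, -, hq, hXq⟩ := hX.2.1 i
  exact ⟨WithLp.toLp 2 fun j ↦ (q j : ℝ),
    coordinateLattice.mem_of_apply_eq_intCast hq fun _ ↦ rfl, PiLp.ext hXq⟩

end

section

open Asymptotics Topology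

/-- A measurable, bounded, nowhere vanishing, `L`-periodic coefficient which agrees with `1` to
order `β` at the origin, and hence at every point of the lattice `L`. -/
structure IsPeriodicPerturbation {E : Type*} [SeminormedAddCommGroup E] [MeasurableSpace E]
    (L : Submodule ℤ E) (β : ℝ) (K : E → ℝ) : Prop where
  measurable : Measurable K
  ne_zero : ∀ x, K x ≠ 0
  bounded : ∃ c, ∀ x, |K x| ≤ c
  periodic : ∀ z ∈ L, Function.Periodic K z
  isBigO_sub_one : (fun x ↦ K x - 1) =O[𝓝 0] fun x ↦ ‖x‖ ^ β

lemma exists_abs_le_mul_min_one_of_isBigO {E : Type*} [SeminormedAddCommGroup E] {f : E → ℝ}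
    {β c : ℝ} (hβ : 0 ≤ β) (hbdd : ∀ x, |f x| ≤ c) (hf : f =O[𝓝 0] fun x ↦ ‖x‖ ^ β) :
    ∃ κ, 0 ≤ κ ∧ ∀ x, |f x| ≤ κ * min 1 (‖x‖ ^ β) := by
  obtain ⟨c', hc', hloc⟩ := hf.exists_nonneg
  obtain ⟨δ, hδ, hball⟩ := Metric.eventually_nhds_iff.1 hloc.bound
  have hc : 0 ≤ c := (abs_nonneg _).trans (hbdd 0)
  refine ⟨c + c' + c * δ ^ (-β), by positivity, fun x ↦ ?_⟩
  have hpow : 0 ≤ ‖x‖ ^ β := by positivity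
  have hcδ : 0 ≤ c * δ ^ (-β) := by positivity
  suffices hx : |f x| ≤ (c + c' + c * δ ^ (-β)) * ‖x‖ ^ β by
    rw [mul_min_of_nonneg _ _ (by positivity), mul_one]
    exact le_min ((hbdd x).trans (by linarith)) hx
  obtain hxδ | hxδ := lt_or_ge ‖x‖ δ
  · have hnear := hball (y := x) (by rwa [dist_zero_right])
    rw [Real.norm_eq_abs, Real.norm_of_nonneg hpow] at hnear
    exact hnear.trans (by gcongr; linarith)
  · calc |f x| ≤ c * (δ ^ (-β) * δ ^ β) := by
          rw [← Real.rpow_add hδ, neg_add_cancel, Real.rpow_zero, mul_one]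
          exact hbdd x
      _ ≤ c * (δ ^ (-β) * ‖x‖ ^ β) := by gcongr
      _ = c * δ ^ (-β) * ‖x‖ ^ β := by ring
      _ ≤ (c + c' + c * δ ^ (-β)) * ‖x‖ ^ β := by gcongr; linarith

namespace IsPeriodicPerturbation

variable {E : Type*} [SeminormedAddCommGroup E] [MeasurableSpace E] {L : Submodule ℤ E} {β : ℝ}
  {K : E → ℝ}

lemma exists_abs_sub_one_le (hK : IsPeriodicPerturbation L β K) (hβ : 0 ≤ β) :
    ∃ κ, 0 ≤ κ ∧ ∀ x, |K x - 1| ≤ κ * min 1 (‖x‖ ^ β) := by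
  obtain ⟨c, hc⟩ := hK.bounded
  exact exists_abs_le_mul_min_one_of_isBigO hβ
    (fun x ↦ (abs_sub _ _).trans (add_le_add_left (hc x) _)) hK.isBigO_sub_one

lemma abs_smul_sub_one_le [NormedSpace ℝ E] {κ lam : ℝ} {z : E}
    (hK : IsPeriodicPerturbation L β K) (hβ : 0 ≤ β) (hκ₀ : 0 ≤ κ)
    (hκ : ∀ x, |K x - 1| ≤ κ * min 1 (‖x‖ ^ β)) (hlam : 0 < lam) (hz : lam⁻¹ • z ∈ L) (x : E) :
    |K (lam⁻¹ • x) - 1| ≤ κ * min 1 (((1 + ‖x - z‖) / lam) ^ β) := by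
  rw [← (hK.periodic _ hz).sub_eq, ← smul_sub]
  refine (hκ _).trans ?_
  rw [norm_smul, norm_inv, Real.norm_of_nonneg hlam.le, inv_mul_eq_div]
  gcongr
  exact le_add_of_nonneg_left zero_le_one

end IsPeriodicPerturbation

lemma isBigO_sum_mul_abs_rpow {n : ℕ} {β : ℝ} (hβ : 0 ≤ β) (a : Fin n → ℝ) :
    (fun x : EuclideanSpace ℝ (Fin n) ↦ ∑ i, a i * |x i| ^ β) =O[𝓝 0] fun x ↦ ‖x‖ ^ β :=
  IsBigO.fun_sum fun i _ ↦ .const_mul_left (.of_norm_le fun x ↦ by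
    rw [Real.norm_of_nonneg (by positivity)]
    exact Real.rpow_le_rpow (abs_nonneg _) (PiLp.norm_apply_le x i) hβ) _

lemma isBigO_norm_rpow_of_tendsto_sum_iteratedFDeriv {E : Type*} [NormedAddCommGroup E]
    [NormedSpace ℝ E] {R : E → ℝ} {β : ℝ} (hR₀ : R 0 = 0)
    (hR : Filter.Tendsto (fun y ↦ ∑ j ∈ Finset.range (⌊β⌋₊ + 1),
      ‖iteratedFDeriv ℝ j R y‖ * ‖y‖ ^ (-β + (j : ℝ))) (𝓝[≠] 0) (𝓝 0)) :
    R =O[𝓝 0] fun x ↦ ‖x‖ ^ β := by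
  have hlt := eventually_nhdsWithin_iff.1 (hR.eventually_lt_const one_pos)
  refine .of_bound 1 (hlt.mono fun x hx ↦ ?_)
  obtain rfl | hx₀ := eq_or_ne x 0
  · rw [hR₀, norm_zero]
    positivity
  have hxpos : 0 < ‖x‖ := norm_pos_iff.2 hx₀
  have hterm : ‖R x‖ * ‖x‖ ^ (-β) ≤ 1 := by
    refine le_trans ?_ (hx hx₀).le
    simpa only [norm_iteratedFDeriv_zero, Nat.cast_zero, add_zero] using
      Finset.single_le_sum (f := fun j : ℕ ↦ ‖iteratedFDeriv ℝ j R x‖ * ‖x‖ ^ (-β + (j : ℝ)))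
        (fun j _ ↦ by positivity) (Finset.mem_range.2 (Nat.succ_pos ⌊β⌋₊))
  rw [Real.rpow_neg hxpos.le, ← div_eq_mul_inv, div_le_one (by positivity)] at hterm
  rwa [one_mul, Real.norm_of_nonneg (Real.rpow_nonneg (norm_nonneg x) β)]

namespace KHyp

variable {n k : ℕ} {β : ℝ} {a : Fin n → ℝ} {K : EuclideanSpace ℝ (Fin n) → ℝ}

lemma periodic (hK : KHyp n k β a K) {z : EuclideanSpace ℝ (Fin n)}
    (hz : z ∈ coordinateLattice n k) : Function.Periodic K z := by
  obtain ⟨-, -, -, hper, -⟩ := hK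
  induction hz using Submodule.span_induction with
  | mem _ h =>
    obtain ⟨j, hj, rfl⟩ := h
    exact fun x ↦ hper x j hj
  | zero => exact fun x ↦ congrArg K (add_zero x)
  | add _ _ _ _ hx hy => exact hx.add_period hy
  | smul a _ _ hx => exact hx.zsmul a

lemma isPeriodicPerturbation (hK : KHyp n k β a K) (hβ : 0 < β) :
    IsPeriodicPerturbation (coordinateLattice n k) β K := by
  have hperiodic : ∀ z ∈ coordinateLattice n k, Function.Periodic K z := fun _ hz ↦ hK.periodic hz
  obtain ⟨⟨K₀, K₁, hK₀, hbdd⟩, hsmooth, -, -, hone, -, -, -, R, hexp, -, -, hR⟩ := hK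
  have hpos : ∀ x, 0 < K x := fun x ↦ hK₀.trans_le (hbdd x).1
  have hR₀ : R 0 = 0 := by
    have hzero := hexp.self_of_nhds
    simpa [hone, Real.zero_rpow hβ.ne'] using hzero
  refine ⟨hsmooth.continuous.measurable, fun x ↦ (hpos x).ne', ⟨K₁, fun x ↦ ?_⟩, hperiodic, ?_⟩
  · rw [abs_of_pos (hpos x)]
    exact (hbdd x).2
  · have hremainder := isBigO_norm_rpow_of_tendsto_sum_iteratedFDeriv hR₀ hR
    refine ((isBigO_sum_mul_abs_rpow hβ.le a).add hremainder).congr' ?_ .rfl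
    filter_upwards [hexp] with x hx
    rw [hx]
    ring

end KHyp

end

/-! ### The weighted estimate -/

section

open MeasureTheory

lemma rpow_eq_mul_rpow_of_eq_rpow_div_sub {l lam N β : ℝ} (hl : 0 < l) (hN : N < β)
    (hlam : lam = l ^ (N / (β - N))) : lam ^ β = (lam * l) ^ N := by
  have hβN : β - N ≠ 0 := sub_ne_zero.2 hN.ne'
  rw [hlam, ← Real.rpow_add_one hl.ne', ← Real.rpow_mul hl.le, ← Real.rpow_mul hl.le]
  congr 1
  field_simp
  ring

lemma inv_smul_mem_of_eq_mul_natCast_smul {E : Type*} [AddCommGroup E] [Module ℝ E]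
    {L : Submodule ℤ E} {c : ℝ} {l : ℕ} {x : E} (hc : c ≠ 0)
    (hx : ∃ z ∈ L, x = (c * l) • z) : c⁻¹ • x ∈ L := by
  obtain ⟨z, hz, rfl⟩ := hx
  rw [mul_smul, inv_smul_smul₀ hc, Nat.cast_smul_eq_nsmul]
  exact L.nsmul_mem hz l

lemma abs_le_of_eq_deriv_bubble {E : Type*} [NormedAddCommGroup E] [InnerProductSpace ℝ E]
    {C₀ N L Λ : ℝ} {P X : E} {Z : E → ℝ} (hC₀ : 0 < C₀) (hN : 0 ≤ N) (hΛ : 0 < Λ)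
    (hL : Λ + Λ⁻¹ ≤ L) (hPX : ‖P - X‖ ≤ 1)
    (hZ : (∃ v : E, ‖v‖ ≤ 1 ∧ ∀ x, Z x = deriv (fun b : ℝ ↦ bubble C₀ N (P + b • v) Λ x) 0) ∨
      ∀ x, Z x = deriv (fun b ↦ bubble C₀ N P b x) Λ) (x : E) :
    |Z x| ≤ N / 2 * L * bubbleConst C₀ N L * (1 + ‖x - X‖) ^ (-N) := by
  have hinv := inv_pos.2 hΛ
  have hbubble := bubble_nonneg hC₀.le hΛ.le N P x
  have hZx : |Z x| ≤ N / 2 * L * bubble C₀ N P Λ x := by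
    obtain ⟨v, hv, hZv⟩ | hZΛ := hZ
    · rw [hZv]
      exact (abs_deriv_bubble_center_le hC₀.le hN hΛ hv P x).trans (by gcongr; linarith)
    · rw [hZΛ]
      exact (abs_deriv_bubble_concentration_le hC₀.le hN hΛ P x).trans (by gcongr; linarith)
  refine hZx.trans ?_
  rw [mul_assoc _ (bubbleConst C₀ N L)]
  have hL₀ : 0 ≤ L := by linarith
  gcongr
  exact bubble_le hC₀ hN hΛ hL hPX x

theorem stmt_8_general {E : Type*} [NormedAddCommGroup E] [InnerProductSpace ℝ E]
    [FiniteDimensional ℝ E] [MeasurableSpace E] [BorelSpace E] (μ : Measure E)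
    [μ.IsAddHaarMeasure] {n : ℕ} {s β τ C₀ C₁ C₂ : ℝ} {L : Submodule ℤ E} {K : E → ℝ}
    (hn : Module.finrank ℝ E = n) (hs : 0 < s) (hsτ : s ≤ τ) (hτ : τ < ((n : ℝ) - 2 * s) / 2)
    (hβ₁ : (n : ℝ) - 2 * s < β) (hβ₂ : β ≤ (n : ℝ)) (hC₀ : 0 < C₀) (hC₁ : 0 < C₁) (hC₂ : C₁ ≤ C₂)
    (hL : ∀ z ∈ L, z ≠ 0 → 1 ≤ ‖z‖) (hLτ : Module.finrank ℤ L < τ)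
    (hK : IsPeriodicPerturbation L β K) :
    ∃ C > (0 : ℝ), ∀ l : ℕ, 0 < l →
      ∀ lam : ℝ, lam = (l : ℝ) ^ (((n : ℝ) - 2 * s) / (β - (n : ℝ) + 2 * s)) →
      ∀ {ι : Type*} [Fintype ι] (X : ι → E), Function.Injective X →
      (∀ i, ∃ z ∈ L, X i = (lam * l) • z) →
      ∀ P : ι → E, (∀ i, ‖P i - X i‖ ≤ 1) → ∀ Λ : ι → ℝ, (∀ i, Λ i ∈ Set.Icc C₁ C₂) →
      ∀ (r : ι) (Z : E → ℝ),
      ((∃ v : E, ‖v‖ ≤ 1 ∧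
          ∀ x, Z x = deriv (fun b : ℝ ↦ bubble C₀ (n - 2 * s) (P r + b • v) (Λ r) x) 0) ∨
        ∀ x, Z x = deriv (fun b ↦ bubble C₀ (n - 2 * s) (P r) b x) (Λ r)) →
      ∀ (φ : E → ℝ) (nφ : ℝ),
      (∀ y, |φ y| ≤ nφ * starWeight X lam (τ - s) ((n - 2 * s) / 2 + τ) y) →
      ∫ x, bubble C₀ (n - 2 * s) (P r) (Λ r) x ^ (4 * s / (n - 2 * s)) * Z x * φ x ∂μ = 0 →
      |∫ x, K (lam⁻¹ • x) *
          (∑ i, bubble C₀ (n - 2 * s) (P i) (Λ i) x) ^ (4 * s / (n - 2 * s)) * Z x * φ x ∂μ| ≤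
        C * nφ * lam ^ (-(τ - s)) * (lam * l) ^ (-((n : ℝ) / 2)) := by
  have hN : 0 < (n : ℝ) - 2 * s := by linarith
  obtain ⟨e, he⟩ := exists_errorExponents hs hsτ hτ (div_mul_cancel₀ (4 * s) hN.ne')
    (hN.trans hβ₁) (by linarith)
  obtain ⟨κ, hκ₀, hκ⟩ := hK.exists_abs_sub_one_le (hN.trans hβ₁).le
  have hconc : ∀ Λ ∈ Set.Icc C₁ C₂, 0 < Λ ∧ Λ + Λ⁻¹ ≤ C₂ + C₁⁻¹ := fun Λ hΛ ↦
    ⟨hC₁.trans_le hΛ.1, add_le_add hΛ.2 (inv_anti₀ hC₁ hΛ.1)⟩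
  have hconst : 0 < C₂ + C₁⁻¹ := add_pos (hC₁.trans_le hC₂) (inv_pos.2 hC₁)
  let B := bubbleConst C₀ (n - 2 * s) (C₂ + C₁⁻¹)
  let M := ∑' z : L, coupling 1 τ (z : E)
  let C := errorConst (n - 2 * s) s τ (4 * s / (n - 2 * s)) e M B κ *
    ((n - 2 * s) / 2 * (C₂ + C₁⁻¹) * B) * (M * ∫ x : E, (1 + ‖x‖) ^ (-e) ∂μ)
  refine ⟨max C 1, lt_max_of_lt_right one_pos, fun l hl lam hlam ι _ X hX hXL P hP Λ hΛ r Z hZ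
    φ nφ hφ horth ↦ ?_⟩
  have hl₁ : (1 : ℝ) ≤ l := mod_cast hl
  have hlam₁ : 1 ≤ lam := hlam ▸ Real.one_le_rpow hl₁ (div_nonneg hN.le (by linarith))
  have hlam₀ : 0 < lam := one_pos.trans_le hlam₁
  have hd : lam ≤ lam * l := le_mul_of_one_le_right hlam₀.le hl₁
  have : Nonempty ι := ⟨r⟩
  have hnφ : 0 ≤ nφ := nonneg_of_mul_nonneg_left ((abs_nonneg _).trans (hφ 0))
    (starWeight_pos hlam₀ X _ _ 0)
  have hbound := he.abs_integral_le (B := B) (by rw [hn]; linarith)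
    (isSparse_of_mem_lattice hL hLτ (by positivity) hX hXL) (hlam₁.trans hd) hlam₀ hd
    (rpow_eq_mul_rpow_of_eq_rpow_div_sub (by positivity) hβ₁
      (by rw [hlam]; congr 2; ring)) (bubbleConst_pos hC₀ hconst _) hκ₀
    (fun i ↦ measurable_bubble C₀ _ (P i) (Λ i))
    (fun x i ↦ ⟨le_bubble hC₀ hN.le (hconc _ (hΛ i)).1 (hconc _ (hΛ i)).2 (hP i) x,
      bubble_le hC₀ hN.le (hconc _ (hΛ i)).1 (hconc _ (hΛ i)).2 (hP i) x⟩)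
    (hK.measurable.comp (measurable_const_smul lam⁻¹)) (fun x ↦ hK.ne_zero _)
    (hK.abs_smul_sub_one_le (hN.trans hβ₁).le hκ₀ hκ hlam₀
      (inv_smul_mem_of_eq_mul_natCast_smul hlam₀.ne' (hXL r)))
    (abs_le_of_eq_deriv_bubble hC₀ hN.le (hconc _ (hΛ r)).1 (hconc _ (hΛ r)).2 (hP r) hZ) hφ horth
  refine hbound.trans ?_
  rw [show (n - 2 * s) / 2 + s = (n : ℝ) / 2 by ring]
  gcongr
  exact le_max_left C 1

end

theorem stmt_8 (n k : ℕ) (s β τ C₀ C₁ C₂ : ℝ) (hn0 : 0 < n) (hs0 : 0 < s) (hs1 : s < 1)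
    (hn : 2 * s + 2 < (n : ℝ)) (hk1 : 1 ≤ k) (hk2 : (k : ℝ) < ((n : ℝ) - 2 * s) / 2)
    (hβ1 : (n : ℝ) - 2 * s < β) (hβ2 : β < (n : ℝ))
    (hτ1 : (k : ℝ) < τ) (hτ2 : τ < ((n : ℝ) - 2 * s) / 2)
    (hC₀ : 0 < C₀) (hC₁ : 0 < C₁) (hC₁₂ : C₁ < C₂)
    (a : Fin n → ℝ) (K : EuclideanSpace ℝ (Fin n) → ℝ) (hK : KHyp n k β a K) :
    ∃ C > (0 : ℝ), ∃ l₀ : ℕ, ∀ l : ℕ, l₀ < l → ∀ m : ℕ, 1 ≤ m →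
      ∀ lam : ℝ, lam = (l : ℝ) ^ (((n : ℝ) - 2 * s) / (β - (n : ℝ) + 2 * s)) →
      ∀ X : Fin ((m + 1) ^ k) → EuclideanSpace ℝ (Fin n), latticeEnum n k m (lam * l) X →
      ∀ P : Fin ((m + 1) ^ k) → EuclideanSpace ℝ (Fin n), (∀ i, ‖P i - X i‖ < 1 / 2) →
      ∀ Λ : Fin ((m + 1) ^ k) → ℝ, (∀ i, Λ i ∈ Set.Icc C₁ C₂) →
      ∀ γ W : EuclideanSpace ℝ (Fin n) → ℝ,
      (∀ y, γ y = min (⨅ i, ((1 + ‖y - X i‖) / lam) ^ (τ - s)) 1) →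
      (∀ y, W y = ∑ i, C₀ * (Λ i / (1 + Λ i ^ 2 * ‖y - P i‖ ^ 2)) ^ (((n : ℝ) - 2 * s) / 2)) →
      ∀ r : Fin ((m + 1) ^ k), ∀ Z : EuclideanSpace ℝ (Fin n) → ℝ,
      -- `Z = Z_{r,t}` for some `t ∈ {1, …, n+1}`: either a derivative in a coordinate of the
      -- center `P^r`, or the derivative in the parameter `Λ_r`.
      ((∃ t : Fin n, ∀ x, Z x =
          deriv (fun b : ℝ => C₀ * (Λ r /
            (1 + Λ r ^ 2 * ‖x - (P r + b • EuclideanSpace.single t (1 : ℝ))‖ ^ 2)) ^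
              (((n : ℝ) - 2 * s) / 2)) 0) ∨
        (∀ x, Z x =
          deriv (fun b : ℝ => C₀ * (b / (1 + b ^ 2 * ‖x - P r‖ ^ 2)) ^
            (((n : ℝ) - 2 * s) / 2)) (Λ r))) →
      ∀ φ : EuclideanSpace ℝ (Fin n) → ℝ, ∀ nφ : ℝ,
      -- `nφ` is any upper bound for the weighted norm `‖φ‖_*`
      (∀ y, |φ y| ≤ nφ * (γ y * ∑ i, (1 + ‖y - X i‖) ^ (-(((n : ℝ) - 2 * s) / 2 + τ)))) →
      -- orthogonality condition
      (∫ x : EuclideanSpace ℝ (Fin n),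
          (C₀ * (Λ r / (1 + Λ r ^ 2 * ‖x - P r‖ ^ 2)) ^ (((n : ℝ) - 2 * s) / 2)) ^
              (4 * s / ((n : ℝ) - 2 * s)) * Z x * φ x) = 0 →
      |∫ x : EuclideanSpace ℝ (Fin n),
          K (lam⁻¹ • x) * W x ^ (4 * s / ((n : ℝ) - 2 * s)) * Z x * φ x| ≤
        C * nφ * lam ^ (-(τ - s)) * (lam * l) ^ (-((n : ℝ) / 2)) := by
  obtain ⟨C, hC, h⟩ := stmt_8_general MeasureTheory.volume (L := coordinateLattice n k)
    finrank_euclideanSpace_fin hs0 (by linarith [Nat.one_le_cast (α := ℝ).2 hk1]) hτ2 hβ1 hβ2.le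
    hC₀ hC₁ hC₁₂.le (fun _ ↦ coordinateLattice.one_le_norm)
    ((Nat.cast_le.2 (coordinateLattice.finrank_le n k)).trans_lt hτ1)
    (hK.isPeriodicPerturbation (by linarith))
  refine ⟨C, hC, 0, fun l hl m _ lam hlam X hX P hP Λ hΛ γ W hγ hW r Z hZ φ nφ hφ horth ↦ ?_⟩
  obtain rfl := funext hγ
  obtain rfl := funext hW
  exact h l hl lam hlam X hX.1 hX.exists_mem_coordinateLattice P
    (fun i ↦ by linarith [hP i]) Λ hΛ r Z
    (hZ.imp_left fun ⟨t, ht⟩ ↦ ⟨EuclideanSpace.single t 1, by simp, ht⟩) φ nφ hφ horth
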